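/- arXiv:1407.2970 — 3 statements merged into one kernel-verified Lean document; each statement's English description precedes it below -/
import Mathlib

section
/- Let q be a prime power, r ≥ 1, s ≥ 2, and n ≥ 0, and let Q_{r,n,s} denote the number of s-powerful monic polynomials in F_q[x_1,…,x_r] of total degree n. Then Q_{r,n,s} = − ∑_{1 ≤ i ≤ n/s} ∑_{j ∈ M_i} (−1)^{|j|} · P_{r,j_1}·P_{r,j_2}·⋯·P_{r,j_{|j|}} · P_{r,n−is}. -/
open MvPolynomial

/-- The key of a monomial in the degree-lexicographic order: first total degree, then
lexicographic comparison of exponent vectors. -/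
noncomputable def degLexKey {r : ℕ} (m : Fin r →₀ ℕ) : Lex (ℕ × Lex (Fin r →₀ ℕ)) :=
  toLex (m.sum fun _ e => e, toLex m)

/-- A multivariate polynomial is monic if the coefficient of its deg-lex leading monomial is 1. -/
def MvMonic {r : ℕ} {F : Type*} [CommSemiring F] (f : MvPolynomial (Fin r) F) : Prop :=
  ∃ m ∈ f.support, (∀ m' ∈ f.support, degLexKey m' ≤ degLexKey m) ∧ f.coeff m = 1

/-- The number of `s`-powerful monic `r`-variate polynomials of total degree `n` over `F`:
those divisible by the `s`-th power of some nonconstant polynomial. -/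
noncomputable def Qcount (F : Type) [Field F] (r n s : ℕ) : ℕ :=
  Set.ncard {f : MvPolynomial (Fin r) F | f.totalDegree = n ∧ MvMonic f ∧
    ∃ g : MvPolynomial (Fin r) F, 0 < g.totalDegree ∧ g ^ s ∣ f}

noncomputable def Pval (q r n : ℕ) : ℚ :=
  (q : ℚ) ^ (Nat.choose (r + n) r - 1) *
    (1 - ((q : ℚ)⁻¹) ^ (Nat.choose (r + n - 1) (r - 1))) / (1 - (q : ℚ)⁻¹)

/-!
Every monic polynomial `f` factors uniquely as `g ^ s * h` with `g` monic and `h` monic and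
`s`-power-free, because polynomials over a field form a unique factorization domain. Counting by
degree, the generating series `P` of all monic polynomials and `S` of the `s`-power-free ones
satisfy `P(z) = P(z ^ s) * S(z)`, so `S(z) = P(z ^ s)⁻¹ * P(z)`. As `P` has constant term `1`, the
coefficients of `P⁻¹` are signed sums over compositions, and the term `i = 0` of the `n`-th
coefficient of this product cancels against `P_n` in the number `P_n - S_n` of `s`-powerful
polynomials.
-/

section PowFree

/-- The `s`-power-free elements of a monoid, generalizing `Squarefree` (the case `s = 2`). Nonzero
polynomials over a field satisfy this exactly when they are not `s`-powerful. -/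
def PowFree {M : Type*} [Monoid M] (s : ℕ) (a : M) : Prop :=
  ∀ b, b ^ s ∣ a → IsUnit b

lemma PowFree.of_dvd {M : Type*} [Monoid M] {s : ℕ} {a b : M} (hb : PowFree s b) (h : a ∣ b) :
    PowFree s a :=
  fun c hc => hb c (hc.trans h)

lemma exists_pow_mul_powFree {M : Type*} [CommMonoidWithZero M] [IsCancelMulZero M] [WfDvdMonoid M]
    {s : ℕ} (hs : s ≠ 0) {a : M} (ha : a ≠ 0) : ∃ b c, PowFree s c ∧ b ^ s * c = a := by
  induction a using (IsWellFounded.wf (r := DvdNotUnit (α := M))).induction with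
  | _ a ih =>
    by_cases hfree : PowFree s a
    · exact ⟨1, a, hfree, by rw [one_pow, one_mul]⟩
    · obtain ⟨d, ⟨k, rfl⟩, hd⟩ : ∃ d, d ^ s ∣ a ∧ ¬ IsUnit d := by
        simpa only [PowFree, not_forall, exists_prop] using hfree
      have hk : k ≠ 0 := right_ne_zero_of_mul ha
      have hlt : DvdNotUnit k (d ^ s * k) :=
        ⟨hk, d ^ s, (isUnit_pow_iff hs).not.mpr hd, mul_comm _ _⟩
      obtain ⟨b, c, hc, rfl⟩ := ih k hlt hk
      exact ⟨d * b, c, hc, by rw [mul_pow, mul_assoc]⟩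

lemma PowFree.associated_of_pow_mul_eq {M : Type*} [CommMonoidWithZero M]
    [UniqueFactorizationMonoid M] {s : ℕ} {a b c d : M} (ha : a ≠ 0)
    (hc : PowFree s c) (hd : PowFree s d) (h : a ^ s * c = b ^ s * d) : Associated a b := by
  obtain ⟨a', b', g, hab, rfl, rfl⟩ := UniqueFactorizationMonoid.exists_reduced_factors a ha b
  have hreduced : a' ^ s * c = b' ^ s * d := by
    apply mul_left_cancel₀ (pow_ne_zero s (left_ne_zero_of_mul ha))
    rw [← mul_assoc, ← mul_assoc, ← mul_pow, ← mul_pow, h]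
  have hab_pow : IsRelPrime (a' ^ s) (b' ^ s) := hab.pow
  have ha' : IsUnit a' := hd a' (hab_pow.dvd_of_dvd_mul_left (Dvd.intro _ hreduced))
  have hb' : IsUnit b' := hc b' (hab_pow.symm.dvd_of_dvd_mul_left (Dvd.intro _ hreduced.symm))
  exact (associated_mul_unit_left g a' ha').trans (associated_mul_unit_right g b' hb')

end PowFree

section CompositionSums

open Finset
open scoped PowerSeries

lemma sum_composition_succ {M : Type*} [AddCommMonoid M] (f : List ℕ → M) (n : ℕ) :
    ∑ c : Composition (n + 1), f c.blocks =
      ∑ p ∈ antidiagonal n, ∑ c : Composition p.2, f ((p.1 + 1) :: c.blocks) := by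
  rw [sum_sigma']
  symm
  refine sum_bij (fun x hx => ((Composition.single (x.1.1 + 1) x.1.1.succ_pos).append x.2).cast ?_)
    (fun _ _ => mem_univ _) ?_ ?_ fun _ _ => rfl
  · have := HasAntidiagonal.mem_antidiagonal.1 (mem_sigma.1 hx).1
    omega
  · rintro ⟨⟨i, j⟩, c⟩ hx ⟨⟨i', j'⟩, c'⟩ hx' h
    have hblocks : (i + 1) :: c.blocks = (i' + 1) :: c'.blocks := congrArg Composition.blocks h
    obtain ⟨hi, hc⟩ := List.cons_eq_cons.1 hblocks
    obtain rfl : i = i' := Nat.succ_injective hi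
    obtain rfl : j = j' := c.blocks_sum.symm.trans ((congrArg List.sum hc).trans c'.blocks_sum)
    obtain rfl : c = c' := Composition.ext hc
    rfl
  · rintro ⟨_ | ⟨b, l⟩, hpos, hsum⟩ -
    · simp at hsum
    · have hb : 0 < b := hpos List.mem_cons_self
      have hmem : (b - 1, l.sum) ∈ antidiagonal n := by
        rw [List.sum_cons] at hsum
        rw [HasAntidiagonal.mem_antidiagonal]
        omega
      exact ⟨⟨(b - 1, l.sum), ⟨l, fun h => hpos (List.mem_cons_of_mem _ h), rfl⟩⟩,
        mem_sigma.2 ⟨hmem, mem_univ _⟩,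
        Composition.ext (congrArg (· :: l) (Nat.sub_add_cancel hb))⟩

variable {R : Type*} [CommRing R]

lemma coeff_invOfUnit_one_succ {φ : R⟦X⟧} (hφ : φ.constantCoeff = 1) (n : ℕ) :
    (φ.invOfUnit 1).coeff (n + 1) =
      - ∑ p ∈ antidiagonal n, φ.coeff (p.1 + 1) * (φ.invOfUnit 1).coeff p.2 := by
  have h := congrArg (PowerSeries.coeff (n + 1)) (φ.mul_invOfUnit 1 hφ)
  rw [PowerSeries.coeff_mul, Nat.sum_antidiagonal_succ,
    PowerSeries.coeff_zero_eq_constantCoeff_apply, hφ, one_mul, PowerSeries.coeff_one,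
    if_neg n.succ_ne_zero] at h
  exact eq_neg_of_add_eq_zero_left h

lemma coeff_invOfUnit_one_eq_sum_composition {φ : R⟦X⟧} (hφ : φ.constantCoeff = 1) (n : ℕ) :
    (φ.invOfUnit 1).coeff n =
      ∑ c : Composition n, (-1) ^ c.length * (c.blocks.map fun j => φ.coeff j).prod := by
  induction n using Nat.strong_induction_on with
  | _ n ih =>
    cases n with
    | zero =>
      rw [Fintype.sum_eq_single (Composition.ones 0) fun c hc =>
        absurd (Composition.ext (by simp)) hc]
      simp
    | succ n =>
      simp only [← Composition.blocks_length]
      rw [coeff_invOfUnit_one_succ hφ, sum_composition_succ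
        (fun l => (-1) ^ l.length * (l.map fun j => φ.coeff j).prod), ← sum_neg_distrib]
      refine sum_congr rfl fun p hp => ?_
      have hp_lt : p.2 < n + 1 :=
        Nat.lt_succ_of_le (HasAntidiagonal.antidiagonal.snd_le hp)
      rw [ih p.2 hp_lt, mul_sum, ← sum_neg_distrib]
      refine sum_congr rfl fun c _ => ?_
      rw [List.map_cons, List.prod_cons, List.length_cons, Composition.blocks_length]
      ring

lemma lt_div_add_one_iff_mul_le {s : ℕ} (hs : s ≠ 0) {i n : ℕ} : i < n / s + 1 ↔ i * s ≤ n := by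
  rw [Nat.lt_succ_iff, Nat.le_div_iff_mul_le (Nat.pos_of_ne_zero hs)]

lemma coeff_expand_mul_eq_sum_range {s : ℕ} (hs : s ≠ 0) (φ ψ : R⟦X⟧) (n : ℕ) :
    (φ.expand s hs * ψ).coeff n = ∑ i ∈ range (n / s + 1), φ.coeff i * ψ.coeff (n - i * s) := by
  rw [PowerSeries.coeff_mul]
  symm
  refine sum_of_injOn (fun i => (i * s, n - i * s)) ?_ ?_ ?_ ?_
  · intro i _ j _ hij
    exact Nat.eq_of_mul_eq_mul_right (Nat.pos_of_ne_zero hs) (Prod.ext_iff.1 hij).1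
  · intro i hi
    exact mem_coe.2 (HasAntidiagonal.mem_antidiagonal.2
      (Nat.add_sub_cancel' ((lt_div_add_one_iff_mul_le hs).1 (mem_range.1 hi))))
  · rintro ⟨a, b⟩ hab hnot
    rw [PowerSeries.coeff_expand, if_neg, zero_mul]
    rintro ⟨i, rfl⟩
    obtain rfl : s * i + b = n := HasAntidiagonal.mem_antidiagonal.1 hab
    refine hnot ⟨i, mem_coe.2 (mem_range.2 ((lt_div_add_one_iff_mul_le hs).2 ?_)), ?_⟩
    · rw [mul_comm]
      exact Nat.le_add_right _ _
    · simp only [mul_comm i s, Nat.add_sub_cancel_left]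
  · intro i _
    rw [mul_comm i s, PowerSeries.coeff_expand_mul]

lemma eq_expand_invOfUnit_mul {s : ℕ} (hs : s ≠ 0) {φ ψ : R⟦X⟧} (hφ : φ.constantCoeff = 1)
    (h : φ = φ.expand s hs * ψ) : ψ = (φ.invOfUnit 1).expand s hs * φ := by
  calc
    ψ = (φ.invOfUnit 1 * φ).expand s hs * ψ := by
      rw [φ.invOfUnit_mul 1 hφ, map_one, one_mul]
    _ = (φ.invOfUnit 1).expand s hs * (φ.expand s hs * ψ) := by rw [map_mul, mul_assoc]
    _ = (φ.invOfUnit 1).expand s hs * φ := by rw [← h]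

lemma coeff_sub_coeff_eq_neg_sum_composition {s : ℕ} (hs : s ≠ 0) {φ ψ : R⟦X⟧}
    (hφ : φ.constantCoeff = 1) (h : φ = φ.expand s hs * ψ) (n : ℕ) :
    φ.coeff n - ψ.coeff n = - ∑ i ∈ Icc 1 (n / s), ∑ c : Composition i,
      (-1) ^ c.length * (c.blocks.map fun j => φ.coeff j).prod * φ.coeff (n - i * s) := by
  have hzero : (φ.invOfUnit 1).coeff 0 = 1 := by
    rw [PowerSeries.coeff_zero_eq_constantCoeff_apply, PowerSeries.constantCoeff_invOfUnit,
      inv_one, Units.val_one]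
  have hψ : ψ.coeff n = φ.coeff n +
      ∑ i ∈ Icc 1 (n / s), (φ.invOfUnit 1).coeff i * φ.coeff (n - i * s) := by
    rw [eq_expand_invOfUnit_mul hs hφ h, coeff_expand_mul_eq_sum_range, range_eq_Ico,
      sum_eq_sum_Ico_succ_bot (Nat.succ_pos _), hzero, one_mul, zero_mul, Nat.sub_zero]
    rfl
  simp_rw [hψ, sub_add_cancel_left, coeff_invOfUnit_one_eq_sum_composition hφ, sum_mul]

end CompositionSums

section Monic

section NoZeroDivisors

variable {σ R : Type*} [CommSemiring R] [NoZeroDivisors R] {m : MonomialOrder σ}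
  {f g : MvPolynomial σ R}

lemma totalDegree_pow_of_isDomain (f : MvPolynomial σ R) (k : ℕ) :
    (f ^ k).totalDegree = k * f.totalDegree := by
  obtain rfl | hf := eq_or_ne f 0
  · cases k <;> simp
  · induction k with
    | zero => rw [pow_zero, totalDegree_one, zero_mul]
    | succ k ih =>
      rw [pow_succ, totalDegree_mul_of_isDomain (pow_ne_zero k hf) hf, ih, Nat.succ_mul]

lemma totalDegree_pow_mul_of_monic [Nontrivial R] (hf : m.Monic f) (hg : m.Monic g) (s : ℕ) :
    (f ^ s * g).totalDegree = f.totalDegree * s + g.totalDegree := by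
  rw [totalDegree_mul_of_isDomain hf.pow.ne_zero hg.ne_zero, totalDegree_pow_of_isDomain, mul_comm]

lemma monic_of_monic_mul_left (hf : m.Monic f) (hfg : m.Monic (f * g)) : m.Monic g := by
  rwa [MonomialOrder.Monic, m.leadingCoeff_mul, hf.leadingCoeff_eq_one, one_mul] at hfg

lemma eq_of_C_mul_monic_eq_C_mul_monic (hf : m.Monic f) (hg : m.Monic g) {a b : R}
    (h : C a * f = C b * g) : a = b := by
  simpa only [m.leadingCoeff_mul, m.leadingCoeff_C, hf.leadingCoeff_eq_one, hg.leadingCoeff_eq_one,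
    mul_one] using congrArg m.leadingCoeff h

end NoZeroDivisors

section IsDomain

variable {σ R : Type*} [CommRing R] [IsDomain R] {m : MonomialOrder σ} {f g : MvPolynomial σ R}

lemma eq_of_associated_of_monic (hf : m.Monic f) (hg : m.Monic g) (h : Associated f g) :
    f = g := by
  obtain ⟨u, rfl⟩ := h
  obtain ⟨c, -, hc⟩ := isUnit_iff_eq_C_of_isReduced.1 u.isUnit
  rw [hc, MonomialOrder.Monic, m.leadingCoeff_mul, hf.leadingCoeff_eq_one, m.leadingCoeff_C,
    one_mul] at hg
  rw [hc, hg, C_1, mul_one]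

lemma monic_pow_mul_powFree_unique [UniqueFactorizationMonoid R] {s : ℕ}
    {f' g' : MvPolynomial σ R} (hf : m.Monic f) (hf' : m.Monic f') (hg : PowFree s g)
    (hg' : PowFree s g') (heq : f ^ s * g = f' ^ s * g') : f = f' ∧ g = g' := by
  obtain rfl : f = f' :=
    eq_of_associated_of_monic hf hf' (hg.associated_of_pow_mul_eq hf.ne_zero hg' heq)
  exact ⟨rfl, mul_left_cancel₀ hf.pow.ne_zero heq⟩

end IsDomain

section Field

variable {σ K : Type*} [Field K] (m : MonomialOrder σ) {f : MvPolynomial σ K} {s : ℕ}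

lemma isUnit_iff_totalDegree_eq_zero (hf : f ≠ 0) : IsUnit f ↔ f.totalDegree = 0 := by
  refine ⟨fun h => (isUnit_iff_totalDegree_of_isReduced.1 h).2, fun h => ?_⟩
  have hC := totalDegree_eq_zero_iff_eq_C.1 h
  rw [hC, Ne, C_eq_zero] at hf
  rw [hC]
  exact (isUnit_iff_ne_zero.2 hf).map C

lemma not_powFree_iff_exists_totalDegree_pos (hs : s ≠ 0) (hf : f ≠ 0) :
    ¬ PowFree s f ↔ ∃ g : MvPolynomial σ K, 0 < g.totalDegree ∧ g ^ s ∣ f := by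
  simp only [PowFree, not_forall, exists_prop]
  refine exists_congr fun g => ?_
  rw [and_comm]
  refine and_congr_left fun hg => ?_
  have hg0 : g ≠ 0 := by
    rintro rfl
    rw [zero_pow hs, zero_dvd_iff] at hg
    exact hf hg
  rw [isUnit_iff_totalDegree_eq_zero hg0, Nat.pos_iff_ne_zero]

lemma exists_units_C_mul_monic_eq (hf : f ≠ 0) :
    ∃ (u : Kˣ) (g : MvPolynomial σ K), m.Monic g ∧ C (u : K) * g = f := by
  have hlc : m.leadingCoeff f ≠ 0 := m.leadingCoeff_ne_zero_iff.2 hf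
  refine ⟨Units.mk0 _ hlc, C (m.leadingCoeff f)⁻¹ * f, ?_, ?_⟩
  · rw [MonomialOrder.Monic, m.leadingCoeff_mul, m.leadingCoeff_C, inv_mul_cancel₀ hlc]
  · rw [Units.val_mk0, ← mul_assoc, ← C_mul, mul_inv_cancel₀ hlc, C_1, one_mul]

lemma exists_monic_associated (hf : f ≠ 0) : ∃ g, m.Monic g ∧ Associated f g := by
  obtain ⟨u, g, hg, rfl⟩ := exists_units_C_mul_monic_eq m hf
  exact ⟨g, hg, associated_unit_mul_left g _ (u.isUnit.map C)⟩

variable {m} in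
lemma exists_monic_pow_mul_powFree (hs : s ≠ 0) (hf : m.Monic f) :
    ∃ g h, m.Monic g ∧ m.Monic h ∧ PowFree s h ∧ g ^ s * h = f := by
  obtain ⟨b, c, hc, rfl⟩ := exists_pow_mul_powFree hs hf.ne_zero
  have hbs : b ^ s ≠ 0 := left_ne_zero_of_mul hf.ne_zero
  obtain ⟨g, hg, hbg⟩ := exists_monic_associated m ((pow_ne_zero_iff hs).1 hbs)
  have hbgs : Associated (b ^ s) (g ^ s) := hbg.pow_pow
  obtain ⟨h, hh⟩ : g ^ s ∣ b ^ s * c := hbgs.symm.dvd.mul_right c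
  have hch : Associated c h := Associated.of_mul_left (.of_eq hh) hbgs hbs
  exact ⟨g, h, hg, monic_of_monic_mul_left hg.pow (hh ▸ hf), hc.of_dvd hch.symm.dvd, hh.symm⟩

end Field

end Monic

section Counting

section MonicOfDegree

variable {σ : Type*} (m : MonomialOrder σ) (R : Type*) [CommSemiring R]

/-- The set of `m`-monic polynomials over `R` of total degree exactly `n`; over a finite field it
is counted by the number `P_{r,n}` of the theorem. -/
def monicOfDegree (n : ℕ) : Set (MvPolynomial σ R) :=
  {f | f.totalDegree = n ∧ m.Monic f}

/-- The set of `m`-monic polynomials over `R` of total degree exactly `n` which are `s`-power-free;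
over a field it is the complement in `monicOfDegree m R n` of the `s`-powerful polynomials. -/
def powFreeMonicOfDegree (s n : ℕ) : Set (MvPolynomial σ R) :=
  {f ∈ monicOfDegree m R n | PowFree s f}

lemma monicOfDegree_zero : monicOfDegree m R 0 = {1} := by
  refine Set.eq_singleton_iff_unique_mem.2 ⟨⟨totalDegree_one, m.monic_one⟩, ?_⟩
  rintro f ⟨hf, hmonic⟩
  obtain ⟨c, rfl⟩ : ∃ c, f = C c := ⟨_, totalDegree_eq_zero_iff_eq_C.1 hf⟩
  rw [MonomialOrder.Monic, m.leadingCoeff_C] at hmonic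
  rw [hmonic, C_1]

end MonicOfDegree

variable {σ : Type*} (m : MonomialOrder σ) (K : Type*) [Field K]

lemma natCard_finsupp_sum_le (σ : Type*) [Finite σ] (n : ℕ) :
    Nat.card {d : σ →₀ ℕ | (d.sum fun _ e => e) ≤ n} =
      (Nat.card σ + n).choose (Nat.card σ) := by
  classical
  have := Fintype.ofFinite σ
  have hunion : {d : σ →₀ ℕ | (d.sum fun _ e => e) ≤ n} =
      ((Finset.range (n + 1)).biUnion fun i => Finset.univ.finsuppAntidiag i :
        Finset (σ →₀ ℕ)) := by
    ext d
    simp [Finsupp.sum_fintype]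
  have hdisj : Set.PairwiseDisjoint (Finset.range (n + 1) : Set ℕ)
      fun i => (Finset.univ.finsuppAntidiag i : Finset (σ →₀ ℕ)) :=
    fun i _ j _ hij => Finset.disjoint_left.2 fun d hi hj =>
      hij ((Finset.mem_finsuppAntidiag.1 hi).1.symm.trans (Finset.mem_finsuppAntidiag.1 hj).1)
  rw [hunion, Nat.card_coe_set_eq, Set.ncard_coe_finset, Finset.card_biUnion hdisj]
  simp_rw [Finset.card_finsuppAntidiag_nat_eq_multichoose, Finset.card_univ,
    ← Nat.card_eq_fintype_card]
  rw [Nat.sum_range_multichoose, Nat.add_comm]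

lemma ncard_totalDegree_le [Finite σ] (n : ℕ) :
    {f : MvPolynomial σ K | f.totalDegree ≤ n}.ncard =
      Nat.card K ^ (Nat.card σ + n).choose (Nat.card σ) := by
  have hset : {f : MvPolynomial σ K | f.totalDegree ≤ n} = restrictTotalDegree σ K n :=
    Set.ext fun f => (mem_restrictTotalDegree σ n f).symm
  let basis : Module.Basis _ K (restrictTotalDegree σ K n) := basisRestrictSupport K _
  rw [hset, ← Nat.card_coe_set_eq, SetLike.coe_sort_coe, Module.natCard_eq_pow_finrank (K := K),
    Module.finrank_eq_nat_card_basis basis, natCard_finsupp_sum_le]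

lemma finite_totalDegree_le [Finite σ] [Finite K] (n : ℕ) :
    {f : MvPolynomial σ K | f.totalDegree ≤ n}.Finite := by
  apply Set.finite_of_ncard_pos
  rw [ncard_totalDegree_le]
  exact pow_pos Nat.card_pos _

lemma ncard_totalDegree_eq_add [Finite σ] [Nonempty σ] [Finite K] (n : ℕ) :
    {f : MvPolynomial σ K | f ≠ 0 ∧ f.totalDegree = n}.ncard +
        Nat.card K ^ (Nat.card σ + n - 1).choose (Nat.card σ) =
      Nat.card K ^ (Nat.card σ + n).choose (Nat.card σ) := by
  rw [← ncard_totalDegree_le K n]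
  cases n with
  | zero =>
    have hset : {f : MvPolynomial σ K | f ≠ 0 ∧ f.totalDegree = 0} =
        {f | f.totalDegree ≤ 0} \ {0} := by
      ext f
      simp [and_comm]
    rw [hset, Nat.add_zero, Nat.choose_eq_zero_of_lt (Nat.sub_one_lt Nat.card_pos.ne'), pow_zero,
      ← Set.ncard_singleton (0 : MvPolynomial σ K)]
    exact Set.ncard_sdiff_add_ncard_of_subset (by simp) (finite_totalDegree_le K 0)
  | succ n =>
    have hset : {f : MvPolynomial σ K | f ≠ 0 ∧ f.totalDegree = n + 1} =
        {f | f.totalDegree ≤ n + 1} \ {f | f.totalDegree ≤ n} := by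
      ext f
      have hne : f.totalDegree = n + 1 → f ≠ 0 := by
        rintro h rfl
        simp at h
      simp only [Set.mem_ofPred_eq, Set.mem_sdiff]
      constructor
      · omega
      · exact fun h => ⟨hne (by omega), by omega⟩
    rw [hset, ← Nat.add_assoc, Nat.add_sub_cancel, ← ncard_totalDegree_le K n]
    exact Set.ncard_sdiff_add_ncard_of_subset (fun f hf => Nat.le_succ_of_le hf)
      (finite_totalDegree_le K (n + 1))

lemma natCard_units_mul_ncard_monicOfDegree (n : ℕ) :
    Nat.card Kˣ * (monicOfDegree m K n).ncard =
      {f : MvPolynomial σ K | f ≠ 0 ∧ f.totalDegree = n}.ncard := by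
  have hC (u : Kˣ) : C (σ := σ) (u : K) ≠ 0 := C_ne_zero.2 u.ne_zero
  have htd (u : Kˣ) {f : MvPolynomial σ K} (hf : f ≠ 0) :
      (C (u : K) * f).totalDegree = f.totalDegree := by
    rw [totalDegree_mul_of_isDomain (hC u) hf, totalDegree_C, zero_add]
  rw [← Nat.card_coe_set_eq, ← Nat.card_coe_set_eq, ← Nat.card_prod]
  refine Nat.card_congr (Equiv.ofBijective (fun x => ⟨C (x.1 : K) * x.2.1,
    mul_ne_zero (hC x.1) x.2.2.2.ne_zero, (htd x.1 x.2.2.2.ne_zero).trans x.2.2.1⟩) ⟨?_, ?_⟩)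
  · rintro ⟨u, f, hf⟩ ⟨v, g, hg⟩ h
    have hfg : C (u : K) * f = C (v : K) * g := congrArg Subtype.val h
    obtain rfl : u = v := Units.ext (eq_of_C_mul_monic_eq_C_mul_monic hf.2 hg.2 hfg)
    obtain rfl : f = g := mul_left_cancel₀ (hC u) hfg
    rfl
  · rintro ⟨f, hf, rfl⟩
    obtain ⟨u, g, hg, rfl⟩ := exists_units_C_mul_monic_eq m hf
    exact ⟨⟨u, g, (htd u hg.ne_zero).symm, hg⟩, rfl⟩

lemma sub_one_mul_Pval {q r : ℕ} (hq : 1 < q) (hr : r ≠ 0) (n : ℕ) :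
    ((q : ℚ) - 1) * Pval q r n = (q : ℚ) ^ (r + n).choose r - (q : ℚ) ^ (r + n - 1).choose r := by
  have hq0 : (q : ℚ) ≠ 0 := by positivity
  have hq1 : (q : ℚ) - 1 ≠ 0 := sub_ne_zero.2 (by exact_mod_cast hq.ne')
  obtain ⟨r, rfl⟩ := Nat.exists_eq_add_one_of_ne_zero hr
  obtain ⟨a, ha⟩ : ∃ a, (r + 1 + n).choose (r + 1) = a + 1 :=
    Nat.exists_eq_add_one_of_ne_zero (Nat.choose_pos (Nat.le_add_right _ _)).ne'
  have hpascal : a + 1 = (r + n).choose r + (r + n).choose (r + 1) := by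
    rw [← ha, Nat.add_right_comm, Nat.choose_succ_succ]
  rw [Pval, ha, Nat.add_sub_cancel, Nat.add_sub_cancel, Nat.add_right_comm, Nat.add_sub_cancel]
  calc
    ((q : ℚ) - 1) * (q ^ a * (1 - (q : ℚ)⁻¹ ^ (r + n).choose r) / (1 - (q : ℚ)⁻¹)) =
        q ^ (a + 1) * (1 - (q : ℚ)⁻¹ ^ (r + n).choose r) := by
      field_simp
      ring
    _ = q ^ (a + 1) - q ^ (r + n).choose (r + 1) := by
      rw [mul_sub, mul_one, hpascal, pow_add, inv_pow, mul_right_comm,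
        mul_inv_cancel₀ (pow_ne_zero _ hq0), one_mul]

lemma ncard_monicOfDegree [Finite σ] [Nonempty σ] [Finite K] (n : ℕ) :
    ((monicOfDegree m K n).ncard : ℚ) = Pval (Nat.card K) (Nat.card σ) n := by
  have hq : 1 < Nat.card K := Finite.one_lt_card
  have hq1 : (Nat.card K : ℚ) - 1 ≠ 0 := sub_ne_zero.2 (by exact_mod_cast hq.ne')
  apply mul_left_cancel₀ hq1
  rw [sub_one_mul_Pval hq Nat.card_pos.ne', eq_sub_iff_add_eq, ← Nat.cast_pred Nat.card_pos,
    ← Nat.card_units]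
  exact_mod_cast (natCard_units_mul_ncard_monicOfDegree m K n).symm ▸ ncard_totalDegree_eq_add K n

lemma finite_monicOfDegree [Finite σ] [Finite K] (n : ℕ) : (monicOfDegree m K n).Finite :=
  (finite_totalDegree_le K n).subset fun _ hf => hf.1.le

lemma ncard_monicOfDegree_eq_sum [Finite σ] [Finite K] {s : ℕ} (hs : s ≠ 0) (n : ℕ) :
    (monicOfDegree m K n).ncard = ∑ i ∈ Finset.range (n / s + 1),
      (monicOfDegree m K i).ncard * (powFreeMonicOfDegree m K s (n - i * s)).ncard := by
  have hfin (k : ℕ) : Finite (monicOfDegree m K k) := (finite_monicOfDegree m K k).to_subtype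
  have hfin' (k : ℕ) : Finite (powFreeMonicOfDegree m K s k) :=
    ((finite_monicOfDegree m K k).subset (Set.sep_subset _ _)).to_subtype
  simp_rw [← Nat.card_coe_set_eq, ← Nat.card_prod]
  rw [← Fin.sum_univ_eq_sum_range (fun i =>
    Nat.card (monicOfDegree m K i × powFreeMonicOfDegree m K s (n - i * s))), ← Nat.card_sigma]
  symm
  refine Nat.card_congr (Equiv.ofBijective (fun x => ⟨x.2.1.1 ^ s * x.2.2.1, ?_, ?_⟩) ⟨?_, ?_⟩)
  · rw [totalDegree_pow_mul_of_monic x.2.1.2.2 x.2.2.2.1.2, x.2.1.2.1, x.2.2.2.1.1,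
      Nat.add_sub_cancel' ((lt_div_add_one_iff_mul_le hs).1 x.1.2)]
  · exact x.2.1.2.2.pow.mul x.2.2.2.1.2
  · rintro ⟨i, g, h⟩ ⟨i', g', h'⟩ heq
    obtain ⟨hg, hh⟩ :=
      monic_pow_mul_powFree_unique g.2.2 g'.2.2 h.2.2 h'.2.2 (congrArg Subtype.val heq)
    obtain rfl : i = i' := Fin.ext (g.2.1.symm.trans ((congrArg totalDegree hg).trans g'.2.1))
    obtain rfl : g = g' := Subtype.ext hg
    obtain rfl : h = h' := Subtype.ext hh
    rfl
  · rintro ⟨f, rfl, hf⟩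
    obtain ⟨g, h, hg, hh, hfree, rfl⟩ := exists_monic_pow_mul_powFree hs hf
    have hdeg := totalDegree_pow_mul_of_monic hg hh s
    have hi : g.totalDegree * s ≤ (g ^ s * h).totalDegree := hdeg ▸ Nat.le_add_right _ _
    exact ⟨⟨⟨g.totalDegree, (lt_div_add_one_iff_mul_le hs).2 hi⟩, ⟨g, rfl, hg⟩, h,
      ⟨Nat.eq_sub_of_add_eq' hdeg.symm, hh⟩, hfree⟩, rfl⟩

lemma setOf_powerful_eq_sdiff {s : ℕ} (hs : s ≠ 0) (n : ℕ) :
    {f : MvPolynomial σ K | f.totalDegree = n ∧ m.Monic f ∧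
      ∃ g : MvPolynomial σ K, 0 < g.totalDegree ∧ g ^ s ∣ f} =
      monicOfDegree m K n \ powFreeMonicOfDegree m K s n := by
  ext f
  constructor
  · rintro ⟨hdeg, hf, hg⟩
    exact ⟨⟨hdeg, hf⟩, fun h => (not_powFree_iff_exists_totalDegree_pos hs hf.ne_zero).2 hg h.2⟩
  · rintro ⟨⟨hdeg, hf⟩, hfree⟩
    exact ⟨hdeg, hf, (not_powFree_iff_exists_totalDegree_pos hs hf.ne_zero).1
      fun h => hfree ⟨⟨hdeg, hf⟩, h⟩⟩

end Counting

section GeneratingSeries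

open scoped PowerSeries

variable {σ : Type*} (m : MonomialOrder σ) (K : Type*) [Field K]

/-- The generating series `P(z) = ∑ P_n z ^ n` of the number of monic polynomials of degree `n`. -/
noncomputable def monicSeries : ℚ⟦X⟧ :=
  PowerSeries.mk fun n => ((monicOfDegree m K n).ncard : ℚ)

/-- The generating series `S(z)` of the number of `s`-power-free monic polynomials of degree `n`. -/
noncomputable def powFreeMonicSeries (s : ℕ) : ℚ⟦X⟧ :=
  PowerSeries.mk fun n => ((powFreeMonicOfDegree m K s n).ncard : ℚ)

lemma constantCoeff_monicSeries : (monicSeries m K).constantCoeff = 1 := by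
  rw [← PowerSeries.coeff_zero_eq_constantCoeff_apply, monicSeries, PowerSeries.coeff_mk,
    monicOfDegree_zero, Set.ncard_singleton, Nat.cast_one]

lemma monicSeries_eq_expand_mul [Finite σ] [Finite K] {s : ℕ} (hs : s ≠ 0) :
    monicSeries m K = (monicSeries m K).expand s hs * powFreeMonicSeries m K s := by
  ext n
  simp only [coeff_expand_mul_eq_sum_range, monicSeries, powFreeMonicSeries, PowerSeries.coeff_mk]
  exact_mod_cast ncard_monicOfDegree_eq_sum m K hs n

end GeneratingSeries

lemma mvMonic_iff_monic_degLex {r : ℕ} {R : Type*} [CommSemiring R] [Nontrivial R]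
    {f : MvPolynomial (Fin r) R} : MvMonic f ↔ MonomialOrder.degLex.Monic f := by
  constructor
  · rintro ⟨d, hd, hmax, hcoeff⟩
    have hdeg : MonomialOrder.degLex.degree f = d :=
      MonomialOrder.degLex.toSyn.injective (le_antisymm
        (MonomialOrder.degLex.degree_le_iff.2 hmax) (MonomialOrder.degLex.le_degree hd))
    rwa [MonomialOrder.Monic, MonomialOrder.leadingCoeff, hdeg]
  · intro hf
    exact ⟨_, MonomialOrder.degLex.degree_mem_support hf.ne_zero,
      fun _ hd => MonomialOrder.degLex.le_degree hd, hf.leadingCoeff_eq_one⟩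

theorem stmt3_general {σ : Type*} [Finite σ] [Nonempty σ] (m : MonomialOrder σ) (K : Type*)
    [Field K] [Finite K] {s : ℕ} (hs : s ≠ 0) (n : ℕ) :
    ({f : MvPolynomial σ K | f.totalDegree = n ∧ m.Monic f ∧
        ∃ g : MvPolynomial σ K, 0 < g.totalDegree ∧ g ^ s ∣ f}.ncard : ℚ) =
      - ∑ i ∈ Finset.Icc 1 (n / s), ∑ c : Composition i,
          (-1 : ℚ) ^ c.length *
            (c.blocks.map fun j => Pval (Nat.card K) (Nat.card σ) j).prod *
            Pval (Nat.card K) (Nat.card σ) (n - i * s) := by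
  have hseries := coeff_sub_coeff_eq_neg_sum_composition hs (constantCoeff_monicSeries m K)
    (monicSeries_eq_expand_mul m K hs) n
  have hsdiff := Set.ncard_sdiff_add_ncard_of_subset
    (Set.sep_subset _ _ : powFreeMonicOfDegree m K s n ⊆ _) (finite_monicOfDegree m K n)
  simp only [monicSeries, powFreeMonicSeries, PowerSeries.coeff_mk] at hseries
  simp_rw [← ncard_monicOfDegree m K]
  rw [setOf_powerful_eq_sdiff m K hs, ← hseries, eq_sub_iff_add_eq]
  exact_mod_cast hsdiff

theorem stmt3 (q : ℕ) (F : Type) [Field F] [Fintype F] (hq : Fintype.card F = q)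
    (r s n : ℕ) (hr : 1 ≤ r) (hs : 2 ≤ s) :
    (Qcount F r n s : ℚ) =
      - ∑ i ∈ Finset.Icc 1 (n / s), ∑ c : Composition i,
          (-1 : ℚ) ^ c.length * (c.blocks.map fun j => Pval q r j).prod *
            Pval q r (n - i * s) := by
  have : NeZero r := ⟨by omega⟩
  simp only [Qcount, mvMonic_iff_monic_degLex]
  rw [stmt3_general MonomialOrder.degLex F (by omega), Nat.card_fin, Nat.card_eq_fintype_card, hq]
end

section
/- Let q be a prime power, r ≥ 2, s ≥ 2, n ≥ 3s with (n,s) ≠ (6,2), and let #Q_{r,n,s}(F_q) denote the number of s-powerful monic polynomials in F_q[x_1,…,x_r] of total degree n. Then |#Q_{r,n,s}(F_q) − η_{r,n,s}(q)| ≤ η_{r,n,s}(q) · 6·q^{−δ}, where δ = binom(r+n−s,r) − binom(r+n−2s,r) − r(r+1)/2. -/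
open MvPolynomial

noncomputable def eta (q r n s : ℕ) : ℚ :=
  (q : ℚ) ^ (Nat.choose (r + n - s) r + r - 1) * (1 - ((q : ℚ)⁻¹) ^ r) *
    (1 - ((q : ℚ)⁻¹) ^ (Nat.choose (r + n - s - 1) (r - 1))) / (1 - (q : ℚ)⁻¹) ^ 2

/-!
Let `N d` be the number of monic polynomials of degree `d`. A powerful polynomial is `g ^ s * h`
with `g`, `h` monic and `g` nonconstant, and `η = N 1 * N (n - s)` is exactly the number of such
pairs with `deg g = 1`. Hence the error has two sources. The pairs with `deg g = k ≥ 2` number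
`N k * N (n - s * k)`, which decays geometrically from its value at `k = 2` because
`k ↦ choose (r + k) r` is convex. The pairs with `g` linear that give the same product as another
such pair have `h` divisible by the `s`-th power of a second linear polynomial, so there are at most
`N 1 * N 1 * N (n - 2 * s)` of them.
-/

theorem degLexKey_le_iff {r : ℕ} {a b : Fin r →₀ ℕ} :
    degLexKey a ≤ degLexKey b ↔
      MonomialOrder.degLex.toSyn a ≤ MonomialOrder.degLex.toSyn b := by
  rw [MonomialOrder.degLex_le_iff, Finsupp.DegLex.le_iff]
  exact Prod.Lex.toLex_le_toLex

theorem mvMonic_iff_degLex_monic {F : Type*} [CommSemiring F] [Nontrivial F] {r : ℕ}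
    {f : MvPolynomial (Fin r) F} : MvMonic f ↔ MonomialOrder.degLex.Monic f := by
  constructor
  · rintro ⟨a, ha, hmax, hcoeff⟩
    have hf : f ≠ 0 := by rintro rfl; simp at ha
    have ha_eq : a = MonomialOrder.degLex.degree f :=
      MonomialOrder.degLex.toSyn.injective <| le_antisymm (MonomialOrder.degLex.le_degree ha) <|
        degLexKey_le_iff.1 <| hmax _ <| MonomialOrder.degLex.degree_mem_support hf
    rwa [ha_eq] at hcoeff
  · intro hf
    exact ⟨_, MonomialOrder.degLex.degree_mem_support hf.ne_zero,
      fun b hb ↦ degLexKey_le_iff.2 (MonomialOrder.degLex.le_degree hb), hf⟩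

section MonicPolynomials

variable {σ : Type*} (m : MonomialOrder σ)

/-- The monic polynomials of total degree `d`. The monomial order only normalises the leading
coefficient; it need not be compatible with the total degree. -/
def monicsOfTotalDegree (R : Type*) [CommSemiring R] (d : ℕ) : Set (MvPolynomial σ R) :=
  {f | f.totalDegree = d ∧ m.Monic f}

/-- The `s`-powerful monic polynomials of total degree `n`: those divisible by the `s`-th power of a
nonconstant polynomial. -/
def powerfulMonics (R : Type*) [CommSemiring R] (s n : ℕ) : Set (MvPolynomial σ R) :=
  {f ∈ monicsOfTotalDegree m R n | ∃ g : MvPolynomial σ R, 0 < g.totalDegree ∧ g ^ s ∣ f}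

variable {m}

theorem totalDegree_units_smul {R : Type*} [CommSemiring R] (c : Rˣ)
    (f : MvPolynomial σ R) :
    (c • f).totalDegree = f.totalDegree := by
  rw [Units.smul_def]
  refine (totalDegree_smul_le (c : R) f).antisymm ?_
  simpa only [← Units.smul_def, inv_smul_smul] using
    totalDegree_smul_le ((c⁻¹ : Rˣ) : R) (c • f)

theorem eq_one_of_mem_monicsOfTotalDegree_zero {R : Type*} [CommSemiring R]
    {f : MvPolynomial σ R}
    (hf : f ∈ monicsOfTotalDegree m R 0) : f = 1 := by
  have hC := totalDegree_eq_zero_iff_eq_C.1 hf.1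
  have hlead := hf.2.leadingCoeff_eq_one
  rw [hC, m.leadingCoeff_C] at hlead
  rw [hC, hlead, C_1]

section Domain

variable {R : Type*} [CommRing R] [IsDomain R]

theorem totalDegree_pow_mul {f g : MvPolynomial σ R} (hf : f ≠ 0) (hg : g ≠ 0) (s : ℕ) :
    (f ^ s * g).totalDegree = s * f.totalDegree + g.totalDegree := by
  induction s with
  | zero => simp
  | succ s ih =>
    rw [pow_succ', mul_assoc, totalDegree_mul_of_isDomain hf (mul_ne_zero (pow_ne_zero s hf) hg),
      ih]
    ring

theorem pow_mul_mem_monicsOfTotalDegree {a b : ℕ} {f g : MvPolynomial σ R}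
    (hf : f ∈ monicsOfTotalDegree m R a) (hg : g ∈ monicsOfTotalDegree m R b) (s : ℕ) :
    f ^ s * g ∈ monicsOfTotalDegree m R (s * a + b) :=
  ⟨by rw [totalDegree_pow_mul hf.2.ne_zero hg.2.ne_zero, hf.1, hg.1], hf.2.pow.mul hg.2⟩

theorem leadingCoeff_units_smul (c : Rˣ) (f : MvPolynomial σ R) :
    m.leadingCoeff (c • f) = c * m.leadingCoeff f := by
  rw [Units.smul_def, smul_eq_C_mul, m.leadingCoeff_mul, m.leadingCoeff_C]

theorem exists_pow_mul_eq_of_pow_dvd {a n s : ℕ} {f g : MvPolynomial σ R}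
    (hg : g ∈ monicsOfTotalDegree m R a) (hf : f ∈ monicsOfTotalDegree m R n) (hdvd : g ^ s ∣ f) :
    ∃ b, s * a + b = n ∧ ∃ h ∈ monicsOfTotalDegree m R b, g ^ s * h = f := by
  obtain ⟨h, rfl⟩ := hdvd
  have hh : h ≠ 0 := right_ne_zero_of_mul hf.2.ne_zero
  have hmonic : m.Monic h := by
    have hlead := hf.2.leadingCoeff_eq_one
    rwa [m.leadingCoeff_mul, hg.2.pow.leadingCoeff_eq_one, one_mul] at hlead
  exact ⟨h.totalDegree, by rw [← hf.1, totalDegree_pow_mul hg.2.ne_zero hh, hg.1],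
    h, ⟨rfl, hmonic⟩, rfl⟩

theorem eq_of_dvd_of_mem_monicsOfTotalDegree {d : ℕ} {f g : MvPolynomial σ R}
    (hf : f ∈ monicsOfTotalDegree m R d) (hg : g ∈ monicsOfTotalDegree m R d) (hdvd : f ∣ g) :
    f = g := by
  obtain ⟨b, hb, h, hh, rfl⟩ := exists_pow_mul_eq_of_pow_dvd (s := 1) hf hg (by rwa [pow_one])
  obtain rfl : b = 0 := by lia
  rw [eq_one_of_mem_monicsOfTotalDegree_zero hh, mul_one, pow_one]

theorem irreducible_of_mem_monicsOfTotalDegree_one {f : MvPolynomial σ R}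
    (hf : f ∈ monicsOfTotalDegree m R 1) : Irreducible f :=
  irreducible_of_totalDegree_eq_one hf.1 fun _ hx ↦
    isUnit_of_dvd_one (hf.2.leadingCoeff_eq_one ▸ hx (m.degree f))

theorem pow_dvd_of_pow_mul_eq_pow_mul [UniqueFactorizationMonoid R] {s : ℕ}
    {g g' h h' : MvPolynomial σ R}
    (hg : g ∈ monicsOfTotalDegree m R 1) (hg' : g' ∈ monicsOfTotalDegree m R 1) (hne : g' ≠ g)
    (heq : g ^ s * h = g' ^ s * h') : g' ^ s ∣ h := by
  have hrel : IsRelPrime g' g :=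
    (irreducible_of_mem_monicsOfTotalDegree_one hg').isRelPrime_iff_not_dvd.2
      fun hdvd ↦ hne (eq_of_dvd_of_mem_monicsOfTotalDegree hg' hg hdvd)
  exact hrel.pow.dvd_of_dvd_mul_left (Dvd.intro h' heq.symm)

theorem injOn_pow_mul_of_not_pow_dvd [UniqueFactorizationMonoid R] (s : ℕ) :
    Set.InjOn (fun p : MvPolynomial σ R × MvPolynomial σ R ↦ p.1 ^ s * p.2)
      {p | p.1 ∈ monicsOfTotalDegree m R 1 ∧
        ∀ g ∈ monicsOfTotalDegree m R 1, g ≠ p.1 → ¬ g ^ s ∣ p.2} := by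
  rintro ⟨g, h⟩ ⟨hg, hgood⟩ ⟨g', h'⟩ ⟨hg', -⟩ (heq : g ^ s * h = g' ^ s * h')
  obtain rfl : g' = g := by
    by_contra hne
    exact hgood g' hg' hne (pow_dvd_of_pow_mul_eq_pow_mul hg hg' hne heq)
  rw [mul_left_cancel₀ (pow_ne_zero s hg.2.ne_zero) heq]

end Domain

section Field

variable {K : Type*} [Field K]

theorem exists_units_smul_monic {f : MvPolynomial σ K} (hf : f ≠ 0) :
    ∃ c : Kˣ, ∃ g : MvPolynomial σ K, m.Monic g ∧ c • g = f := by
  let c : Kˣ := Units.mk0 (m.leadingCoeff f) (m.leadingCoeff_ne_zero_iff.2 hf)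
  refine ⟨c, c⁻¹ • f, ?_, smul_inv_smul c f⟩
  rw [MonomialOrder.Monic, leadingCoeff_units_smul]
  exact c.inv_mul

theorem bijOn_units_smul_monicsOfTotalDegree (d : ℕ) :
    Set.BijOn (fun p : Kˣ × MvPolynomial σ K ↦ p.1 • p.2)
      (Set.univ ×ˢ monicsOfTotalDegree m K d) {f | f ≠ 0 ∧ f.totalDegree = d} := by
  refine ⟨?_, ?_, ?_⟩
  · rintro ⟨c, f⟩ ⟨-, hf⟩
    exact ⟨(smul_ne_zero_iff_ne c).2 hf.2.ne_zero, (totalDegree_units_smul c f).trans hf.1⟩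
  · rintro ⟨c, f⟩ ⟨-, hf⟩ ⟨c', f'⟩ ⟨-, hf'⟩ (heq : c • f = c' • f')
    obtain rfl : c = c' := by
      have hlead := congrArg m.leadingCoeff heq
      rw [leadingCoeff_units_smul, leadingCoeff_units_smul, hf.2.leadingCoeff_eq_one,
        hf'.2.leadingCoeff_eq_one, mul_one, mul_one] at hlead
      exact Units.ext hlead
    rw [smul_left_cancel c heq]
  · rintro f ⟨hf, rfl⟩
    obtain ⟨c, g, hg, rfl⟩ := exists_units_smul_monic (m := m) hf
    exact ⟨(c, g), ⟨Set.mem_univ c, (totalDegree_units_smul c g).symm, hg⟩, rfl⟩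

theorem pred_mul_ncard_monicsOfTotalDegree (d : ℕ) :
    (Nat.card K - 1) * (monicsOfTotalDegree m K d).ncard =
      {f : MvPolynomial σ K | f ≠ 0 ∧ f.totalDegree = d}.ncard := by
  rw [← (bijOn_units_smul_monicsOfTotalDegree d).ncard_eq, Set.ncard_prod, Set.ncard_univ,
    Nat.card_units]

theorem powerfulMonics_eq_iUnion {s : ℕ} (hs : 0 < s) (n : ℕ) :
    powerfulMonics m K s n = ⋃ k ∈ Finset.range (n / s),
      (fun p : MvPolynomial σ K × MvPolynomial σ K ↦ p.1 ^ s * p.2) ''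
        (monicsOfTotalDegree m K (k + 1) ×ˢ monicsOfTotalDegree m K (n - s * (k + 1))) := by
  ext f
  simp only [Set.mem_iUnion, Finset.mem_range, Set.mem_image, Set.mem_prod, Prod.exists,
    exists_prop, Nat.lt_iff_add_one_le, Nat.le_div_iff_mul_le hs, mul_comm _ s]
  constructor
  · rintro ⟨hf, g, hg, hdvd⟩
    have hg_ne : g ≠ 0 := by rintro rfl; simp at hg
    obtain ⟨c, g, hmonic, rfl⟩ := exists_units_smul_monic (m := m) hg_ne
    rw [totalDegree_units_smul] at hg
    obtain ⟨k, hk⟩ := Nat.exists_eq_add_one.2 hg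
    have hdvd' : g ^ s ∣ f := (pow_dvd_pow_of_dvd ⟨C (c : K), by
      rw [Units.smul_def, smul_eq_C_mul, mul_comm]⟩ s).trans hdvd
    obtain ⟨b, rfl, h, hh, rfl⟩ := exists_pow_mul_eq_of_pow_dvd ⟨hk, hmonic⟩ hf hdvd'
    exact ⟨k, Nat.le_add_right _ _, g, h, ⟨⟨hk, hmonic⟩, by rwa [Nat.add_sub_cancel_left]⟩, rfl⟩
  · rintro ⟨k, hk, g, h, ⟨hg, hh⟩, rfl⟩
    have hmem := pow_mul_mem_monicsOfTotalDegree hg hh s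
    rw [Nat.add_sub_of_le hk] at hmem
    exact ⟨hmem, g, hg.1 ▸ k.succ_pos, dvd_mul_right _ _⟩

end Field

end MonicPolynomials

section Counting

variable {σ : Type*} [Finite σ]

theorem ncard_setOf_finsupp_sum_le (d : ℕ) :
    {a : σ →₀ ℕ | (a.sum fun _ e ↦ e) ≤ d}.ncard = (Nat.card σ + d).choose (Nat.card σ) := by
  classical
  have := Fintype.ofFinite σ
  have hunion : {a : σ →₀ ℕ | (a.sum fun _ e ↦ e) ≤ d} =
      ((Finset.range (d + 1)).biUnion (Finset.univ : Finset σ).finsuppAntidiag :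
        Finset (σ →₀ ℕ)) := by
    ext a
    simp [Finsupp.sum_fintype]
  rw [hunion, Set.ncard_coe_finset, Finset.card_biUnion]
  · simp only [Finset.card_finsuppAntidiag_nat_eq_multichoose, Finset.card_univ,
      Nat.sum_range_multichoose, Nat.card_eq_fintype_card]
    rw [add_comm]
  · intro i _ j _ hij
    refine Finset.disjoint_left.2 fun a hi hj ↦ hij ?_
    rw [← (Finset.mem_finsuppAntidiag.1 hi).1, (Finset.mem_finsuppAntidiag.1 hj).1]

variable {K : Type*} [Field K]

theorem ncard_setOf_totalDegree_le (d : ℕ) :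
    {f : MvPolynomial σ K | f.totalDegree ≤ d}.ncard =
      Nat.card K ^ (Nat.card σ + d).choose (Nat.card σ) := by
  have hset : {f : MvPolynomial σ K | f.totalDegree ≤ d} = restrictTotalDegree σ K d :=
    Set.ext fun f ↦ (mem_restrictTotalDegree σ d f).symm
  have hfinrank : Module.finrank K (restrictTotalDegree σ K d) =
      (Nat.card σ + d).choose (Nat.card σ) :=
    (Module.finrank_eq_nat_card_basis (basisRestrictSupport K _)).trans <|
      (Nat.card_coe_set_eq _).trans (ncard_setOf_finsupp_sum_le d)
  rw [hset, ← Nat.card_coe_set_eq, SetLike.coe_sort_coe, Module.natCard_eq_pow_finrank (K := K),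
    hfinrank]

variable [Finite K]

theorem finite_setOf_totalDegree_le (d : ℕ) :
    {f : MvPolynomial σ K | f.totalDegree ≤ d}.Finite := by
  have := Module.finite_of_finite K (M := restrictTotalDegree σ K d)
  exact (Set.toFinite (restrictTotalDegree σ K d : Set (MvPolynomial σ K))).subset
    fun f hf ↦ (mem_restrictTotalDegree σ d f).2 hf

theorem ncard_setOf_totalDegree_eq_succ (d : ℕ) :
    {f : MvPolynomial σ K | f ≠ 0 ∧ f.totalDegree = d + 1}.ncard +
        Nat.card K ^ (Nat.card σ + d).choose (Nat.card σ) =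
      Nat.card K ^ (Nat.card σ + (d + 1)).choose (Nat.card σ) := by
  have hdiff : {f : MvPolynomial σ K | f ≠ 0 ∧ f.totalDegree = d + 1} =
      {f | f.totalDegree ≤ d + 1} \ {f | f.totalDegree ≤ d} := by
    ext f
    have hne : f.totalDegree = d + 1 → f ≠ 0 := by rintro h rfl; simp at h
    simp only [Set.mem_ofPred_eq, Set.mem_sdiff]
    grind
  rw [hdiff, ← ncard_setOf_totalDegree_le, ← ncard_setOf_totalDegree_le]
  exact Set.ncard_sdiff_add_ncard_of_subset (fun f hf ↦ Nat.le_succ_of_le hf)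
    (finite_setOf_totalDegree_le (d + 1))

variable (m : MonomialOrder σ)

theorem finite_monicsOfTotalDegree (d : ℕ) : (monicsOfTotalDegree m K d).Finite :=
  (finite_setOf_totalDegree_le d).subset fun _ hf ↦ hf.1.le

theorem pred_mul_ncard_monicsOfTotalDegree_le (d : ℕ) :
    (Nat.card K - 1) * (monicsOfTotalDegree m K d).ncard ≤
      Nat.card K ^ (Nat.card σ + d).choose (Nat.card σ) := by
  rw [pred_mul_ncard_monicsOfTotalDegree, ← ncard_setOf_totalDegree_le]
  exact Set.ncard_le_ncard (fun f hf ↦ hf.2.le) (finite_setOf_totalDegree_le d)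

theorem ncard_powerfulMonics_le {s : ℕ} (hs : 0 < s) (n : ℕ) :
    (powerfulMonics m K s n).ncard ≤ ∑ k ∈ Finset.range (n / s),
      (monicsOfTotalDegree m K (k + 1)).ncard *
        (monicsOfTotalDegree m K (n - s * (k + 1))).ncard := by
  rw [powerfulMonics_eq_iUnion hs]
  refine (Finset.set_ncard_biUnion_le _ _).trans (Finset.sum_le_sum fun k _ ↦ ?_)
  rw [← Set.ncard_prod]
  exact Set.ncard_image_le ((finite_monicsOfTotalDegree m _).prod (finite_monicsOfTotalDegree m _))

theorem ncard_mul_ncard_le_ncard_powerfulMonics_add (s d : ℕ) :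
    (monicsOfTotalDegree m K 1).ncard * (monicsOfTotalDegree m K (s + d)).ncard ≤
      (powerfulMonics m K s (2 * s + d)).ncard +
        (monicsOfTotalDegree m K 1).ncard * (monicsOfTotalDegree m K 1).ncard *
          (monicsOfTotalDegree m K d).ncard := by
  have hfin := finite_monicsOfTotalDegree (K := K) m
  rw [← Set.ncard_prod, ← Set.ncard_prod, ← Set.ncard_prod]
  set pairs := monicsOfTotalDegree m K 1 ×ˢ monicsOfTotalDegree m K (s + d)
  set triples :=
    (monicsOfTotalDegree m K 1 ×ˢ monicsOfTotalDegree m K 1) ×ˢ monicsOfTotalDegree m K d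
  have htriples : triples.Finite := ((hfin 1).prod (hfin 1)).prod (hfin d)
  let good := {p ∈ pairs | ∀ g ∈ monicsOfTotalDegree m K 1, g ≠ p.1 → ¬ g ^ s ∣ p.2}
  let toPair : (MvPolynomial σ K × MvPolynomial σ K) × MvPolynomial σ K →
      MvPolynomial σ K × MvPolynomial σ K := fun t ↦ (t.1.1, t.1.2 ^ s * t.2)
  have hcover : pairs ⊆ good ∪ toPair '' triples := by
    rintro ⟨g, h⟩ hp
    by_cases hgood : ∀ g' ∈ monicsOfTotalDegree m K 1, g' ≠ g → ¬ g' ^ s ∣ h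
    · exact Or.inl ⟨hp, hgood⟩
    · push Not at hgood
      obtain ⟨g', hg', -, hdvd⟩ := hgood
      obtain ⟨b, hb, k, hk, rfl⟩ := exists_pow_mul_eq_of_pow_dvd hg' hp.2 hdvd
      obtain rfl : b = d := by lia
      exact Or.inr ⟨((g, g'), k), ⟨⟨hp.1, hg'⟩, hk⟩, rfl⟩
  have hgood_le : good.ncard ≤ (powerfulMonics m K s (2 * s + d)).ncard := by
    refine Set.ncard_le_ncard_of_injOn (fun p ↦ p.1 ^ s * p.2) ?_
      ((injOn_pow_mul_of_not_pow_dvd s).mono fun _ hp ↦ And.imp_left And.left hp)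
      ((hfin _).subset (Set.sep_subset _ _))
    rintro ⟨g, h⟩ ⟨⟨hg, hh⟩, -⟩
    have hmem := pow_mul_mem_monicsOfTotalDegree hg hh s
    rw [show s * 1 + (s + d) = 2 * s + d by ring] at hmem
    exact ⟨hmem, g, hg.1 ▸ one_pos, dvd_mul_right _ _⟩
  calc pairs.ncard
      ≤ (good ∪ toPair '' triples).ncard := Set.ncard_le_ncard hcover <|
        (((hfin _).prod (hfin _)).subset (Set.sep_subset _ _)).union (htriples.image _)
    _ ≤ good.ncard + (toPair '' triples).ncard := Set.ncard_union_le _ _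
    _ ≤ (powerfulMonics m K s (2 * s + d)).ncard + triples.ncard :=
        add_le_add hgood_le (Set.ncard_image_le htriples)

end Counting

theorem choose_add_add_one {r : ℕ} (hr : 0 < r) (a : ℕ) :
    (r + (a + 1)).choose r = (r + a).choose r + (r + a).choose (r - 1) := by
  obtain ⟨t, rfl⟩ := Nat.exists_eq_add_one.2 hr
  rw [← add_assoc, Nat.choose_succ_succ', Nat.add_sub_cancel, add_comm]

theorem strictMono_choose_add {r : ℕ} (hr : 0 < r) : StrictMono fun a ↦ (r + a).choose r :=
  strictMono_nat_of_lt_succ fun a ↦ by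
    rw [choose_add_add_one hr]
    exact Nat.lt_add_of_pos_right (Nat.choose_pos (by lia))

theorem choose_add_two (r : ℕ) : (r + 2).choose r = r * (r + 1) / 2 + (r + 1) := by
  rw [Nat.choose_symm_add, Nat.choose_succ_succ', Nat.choose_one_right, Nat.choose_two_right,
    Nat.add_sub_cancel, mul_comm, add_comm]

theorem choose_add_convex {r : ℕ} (hr : 0 < r) {a b : ℕ} (hab : b ≤ a) (d : ℕ) :
    (r + a).choose r + (r + (b + d)).choose r ≤ (r + (a + d)).choose r + (r + b).choose r := by
  induction d with
  | zero => rfl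
  | succ d ih =>
    have hstep : (r + (b + d)).choose (r - 1) ≤ (r + (a + d)).choose (r - 1) :=
      Nat.choose_le_choose _ (by lia)
    rw [← add_assoc b, ← add_assoc a, choose_add_add_one hr, choose_add_add_one hr]
    lia

theorem choose_add_add_le_choose_add_one {r : ℕ} (hr : 0 < r) (a : ℕ) :
    (r + a).choose r + r ≤ (r + (a + 1)).choose r := by
  have hconv := choose_add_convex hr a.zero_le 1
  simp only [zero_add, add_zero, Nat.choose_self, Nat.choose_succ_self_right] at hconv
  lia

theorem choose_add_two_add_choose_add_le {r s j e : ℕ} (hr : 2 ≤ r) (hs : 2 ≤ s)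
    (hsj : ¬(s = 2 ∧ j = 1 ∧ e = 0)) :
    (r + (j + 2)).choose r + (r + e).choose r + j ≤
      (r + 2).choose r + (r + (e + s * j)).choose r := by
  have hr0 : 0 < r := by lia
  have hmono := strictMono_choose_add hr0
  obtain rfl | hj := Nat.eq_zero_or_pos j
  · simp
  by_cases hlarge : j + 2 ≤ s * j
  · have hconv := choose_add_convex hr0 e.zero_le (j + 2)
    have hgap : s * j - (j + 2) + (r + (e + (j + 2))).choose r ≤ (r + (e + s * j)).choose r := by
      rw [show e + s * j = s * j - (j + 2) + (e + (j + 2)) by lia]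
      exact hmono.add_le_nat _ _
    have htwo : 2 + (r + 0).choose r ≤ (r + 2).choose r := hmono.add_le_nat 2 0
    have hsj_le : 2 * j ≤ s * j := Nat.mul_le_mul_right j hs
    simp only [zero_add, add_zero, Nat.choose_self] at hconv htwo
    lia
  · obtain ⟨rfl, rfl⟩ : s = 2 ∧ j = 1 := by
      constructor <;> nlinarith [not_le.1 hlarge]
    have hconv := choose_add_convex hr0 (show 1 ≤ e by lia) 2
    have hlt : (r + 1).choose r < (r + 2).choose r := hmono one_lt_two
    lia

section Powers

variable {k : Type*} [Field k] [LinearOrder k] [IsStrictOrderedRing k] {q : k}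

theorem three_quarters_mul_pow_le_pow_sub_pow (hq : 2 ≤ q) {a b : ℕ} (hab : a + 2 ≤ b) :
    3 / 4 * q ^ b ≤ q ^ b - q ^ a := by
  have hfour : 4 ≤ q ^ 2 := by nlinarith
  have hpow : 4 * q ^ a ≤ q ^ b :=
    calc 4 * q ^ a ≤ q ^ 2 * q ^ a := by gcongr
      _ = q ^ (a + 2) := by ring
      _ ≤ q ^ b := pow_le_pow_right₀ (by linarith) hab
  linarith

theorem pow_le_pow_mul_half_pow (hq : 2 ≤ q) {a j b : ℕ} (hab : a + j ≤ b) :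
    q ^ a ≤ q ^ b * (1 / 2) ^ j :=
  calc q ^ a = q ^ a * 2 ^ j * (1 / 2) ^ j := by
        rw [mul_assoc, ← mul_pow, mul_one_div_cancel two_ne_zero, one_pow, mul_one]
    _ ≤ q ^ a * q ^ j * (1 / 2) ^ j := by gcongr
    _ = q ^ (a + j) * (1 / 2) ^ j := by rw [pow_add]
    _ ≤ q ^ b * (1 / 2) ^ j := by gcongr; linarith

theorem sum_half_pow_le_two (n : ℕ) : ∑ j ∈ Finset.range n, (1 / 2 : k) ^ j ≤ 2 := by
  have hsum := mul_neg_geom_sum (1 / 2 : k) n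
  have hpos : 0 < (1 / 2 : k) ^ n := by positivity
  linarith

end Powers

section Eta

variable {q : ℕ}

theorem sub_one_sq_mul_eta (hq : 1 < q) {r : ℕ} (hr : 0 < r) (s d : ℕ) :
    ((q : ℚ) - 1) ^ 2 * eta q r (s + (d + 1)) s =
      ((q : ℚ) ^ (r + 1) - q) *
        ((q : ℚ) ^ (r + (d + 1)).choose r - (q : ℚ) ^ (r + d).choose r) := by
  have hq_ne : (q : ℚ) ≠ 0 := by positivity
  have hq_sub : (q : ℚ) - 1 ≠ 0 := sub_ne_zero.2 (by exact_mod_cast hq.ne')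
  have hchoose := choose_add_add_one hr d
  rw [eta, show r + (s + (d + 1)) - s = r + (d + 1) by lia, Nat.add_sub_assoc hr,
    show r + (d + 1) - 1 = r + d by lia, show (1 : ℚ) - (q : ℚ)⁻¹ = (q - 1) / q by field_simp,
    hchoose]
  obtain ⟨t, rfl⟩ := Nat.exists_eq_add_one.2 hr
  simp only [Nat.add_sub_cancel, inv_pow, pow_add, pow_one]
  field_simp

theorem nine_sixteenths_mul_pow_le_sub_one_sq_mul_eta (hq : 1 < q) {r s n : ℕ} (hr : 2 ≤ r)
    (hn : s < n) :
    9 / 16 * (q : ℚ) ^ ((r + (n - s)).choose r + (r + 1)) ≤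
      ((q : ℚ) - 1) ^ 2 * eta q r n s := by
  obtain ⟨d, rfl⟩ := Nat.exists_eq_add_of_lt hn
  have hq_two : (2 : ℚ) ≤ q := by exact_mod_cast hq
  have hr_pos : 0 < r := by lia
  have hgap := choose_add_add_le_choose_add_one hr_pos d
  have hleft := three_quarters_mul_pow_le_pow_sub_pow hq_two (show 1 + 2 ≤ r + 1 by lia)
  have hright := three_quarters_mul_pow_le_pow_sub_pow hq_two
    (show (r + d).choose r + 2 ≤ (r + (d + 1)).choose r by lia)
  rw [pow_one] at hleft
  rw [add_assoc, Nat.add_sub_cancel_left, sub_one_sq_mul_eta hq hr_pos, pow_add]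
  calc 9 / 16 * ((q : ℚ) ^ (r + (d + 1)).choose r * (q : ℚ) ^ (r + 1))
      = 3 / 4 * (q : ℚ) ^ (r + 1) * (3 / 4 * (q : ℚ) ^ (r + (d + 1)).choose r) := by ring
    _ ≤ _ := mul_le_mul hleft hright (by positivity) (le_trans (by positivity) hleft)

theorem two_mul_pow_le_sub_one_sq_mul_eta_mul_zpow (hq : 1 < q) {r s n : ℕ} (hr : 2 ≤ r)
    (hs : 0 < s) (hn : 2 * s ≤ n) :
    2 * (q : ℚ) ^ ((r + 2).choose r + (r + (n - 2 * s)).choose r) ≤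
      ((q : ℚ) - 1) ^ 2 * (eta q r n s * 6 * (q : ℚ) ^
        (-((Nat.choose (r + n - s) r : ℤ) - Nat.choose (r + n - 2 * s) r
            - r * (r + 1) / 2))) := by
  set δ : ℤ := (Nat.choose (r + n - s) r : ℤ) - Nat.choose (r + n - 2 * s) r - r * (r + 1) / 2
    with hδ
  have hq_ne : (q : ℚ) ≠ 0 := by positivity
  have heta := nine_sixteenths_mul_pow_le_sub_one_sq_mul_eta hq hr (show s < n by lia)
  have hexp : (((r + 2).choose r + (r + (n - 2 * s)).choose r : ℕ) : ℤ) =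
      ((r + (n - s)).choose r + (r + 1) : ℕ) + -δ := by
    have hsn : s ≤ n := by lia
    rw [hδ, choose_add_two, Nat.add_sub_assoc hsn, Nat.add_sub_assoc hn]
    push_cast
    ring
  calc 2 * (q : ℚ) ^ ((r + 2).choose r + (r + (n - 2 * s)).choose r)
      = 2 * ((q : ℚ) ^ ((r + (n - s)).choose r + (r + 1)) * (q : ℚ) ^ (-δ)) := by
        rw [← zpow_natCast, hexp, zpow_add₀ hq_ne, zpow_natCast]
    _ ≤ 6 * (9 / 16 * (q : ℚ) ^ ((r + (n - s)).choose r + (r + 1))) * (q : ℚ) ^ (-δ) := by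
        have hnonneg : 0 ≤ (q : ℚ) ^ ((r + (n - s)).choose r + (r + 1)) * (q : ℚ) ^ (-δ) := by
          positivity
        linarith
    _ ≤ 6 * (((q : ℚ) - 1) ^ 2 * eta q r n s) * (q : ℚ) ^ (-δ) := by
        gcongr
    _ = ((q : ℚ) - 1) ^ 2 * (eta q r n s * 6 * (q : ℚ) ^ (-δ)) := by ring

end Eta

theorem two_le_natCast_card {α : Type*} [Finite α] [Nontrivial α] : (2 : ℚ) ≤ Nat.card α := by
  exact_mod_cast Finite.one_lt_card (α := α)

section Estimate

variable {σ K : Type*} [Finite σ] [Field K] [Finite K] (m : MonomialOrder σ)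

theorem sub_one_mul_ncard_monicsOfTotalDegree_succ (d : ℕ) :
    ((Nat.card K : ℚ) - 1) * (monicsOfTotalDegree m K (d + 1)).ncard =
      (Nat.card K : ℚ) ^ (Nat.card σ + (d + 1)).choose (Nat.card σ) -
        (Nat.card K : ℚ) ^ (Nat.card σ + d).choose (Nat.card σ) := by
  rw [eq_sub_iff_add_eq, ← Nat.cast_pred Nat.card_pos]
  have hcard := ncard_setOf_totalDegree_eq_succ (σ := σ) (K := K) d
  rw [← pred_mul_ncard_monicsOfTotalDegree (m := m)] at hcard
  exact_mod_cast hcard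

theorem sub_one_mul_ncard_monicsOfTotalDegree_le (d : ℕ) :
    ((Nat.card K : ℚ) - 1) * (monicsOfTotalDegree m K d).ncard ≤
      (Nat.card K : ℚ) ^ (Nat.card σ + d).choose (Nat.card σ) := by
  rw [← Nat.cast_pred Nat.card_pos]
  exact_mod_cast pred_mul_ncard_monicsOfTotalDegree_le m d

theorem eta_eq_ncard_mul_ncard [Nonempty σ] {s n : ℕ} (hn : s < n) :
    eta (Nat.card K) (Nat.card σ) n s =
      (monicsOfTotalDegree m K 1).ncard * (monicsOfTotalDegree m K (n - s)).ncard := by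
  obtain ⟨d, rfl⟩ := Nat.exists_eq_add_of_lt hn
  have hq_sub : (Nat.card K : ℚ) - 1 ≠ 0 := by linarith [two_le_natCast_card (α := K)]
  have hlinear := sub_one_mul_ncard_monicsOfTotalDegree_succ (K := K) m 0
  rw [zero_add, add_zero, Nat.choose_self, pow_one, Nat.choose_succ_self_right] at hlinear
  refine mul_left_cancel₀ (pow_ne_zero 2 hq_sub) ?_
  rw [add_assoc, Nat.add_sub_cancel_left, sub_one_sq_mul_eta Finite.one_lt_card Nat.card_pos,
    ← hlinear, ← sub_one_mul_ncard_monicsOfTotalDegree_succ m]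
  ring

theorem sub_one_sq_mul_ncard_mul_ncard_le (a b : ℕ) :
    ((Nat.card K : ℚ) - 1) ^ 2 *
        ((monicsOfTotalDegree m K a).ncard * (monicsOfTotalDegree m K b).ncard) ≤
      (Nat.card K : ℚ) ^
        ((Nat.card σ + a).choose (Nat.card σ) + (Nat.card σ + b).choose (Nat.card σ)) := by
  have hq_sub : 0 ≤ (Nat.card K : ℚ) - 1 := by linarith [two_le_natCast_card (α := K)]
  rw [pow_add, sq, mul_mul_mul_comm]
  exact mul_le_mul (sub_one_mul_ncard_monicsOfTotalDegree_le m a)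
    (sub_one_mul_ncard_monicsOfTotalDegree_le m b) (by positivity) (by positivity)

theorem sub_one_sq_mul_sum_ncard_mul_ncard_le (hσ : 2 ≤ Nat.card σ) {s d : ℕ} (hs : 2 ≤ s)
    (hsd : ¬(s = 2 ∧ d = 2)) :
    ((Nat.card K : ℚ) - 1) ^ 2 * ∑ j ∈ Finset.range (d / s + 1),
        ((monicsOfTotalDegree m K (j + 2)).ncard : ℚ) *
          (monicsOfTotalDegree m K (d - s * j)).ncard ≤
      2 * (Nat.card K : ℚ) ^
        ((Nat.card σ + 2).choose (Nat.card σ) + (Nat.card σ + d).choose (Nat.card σ)) := by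
  set D := (Nat.card σ + 2).choose (Nat.card σ) + (Nat.card σ + d).choose (Nat.card σ)
  have hterm : ∀ j ∈ Finset.range (d / s + 1),
      ((Nat.card K : ℚ) - 1) ^ 2 * ((monicsOfTotalDegree m K (j + 2)).ncard *
        (monicsOfTotalDegree m K (d - s * j)).ncard) ≤ (Nat.card K : ℚ) ^ D * (1 / 2) ^ j := by
    intro j hj
    have hsj : s * j ≤ d := by
      rw [mul_comm, ← Nat.le_div_iff_mul_le (by lia)]
      exact Nat.le_of_lt_succ (Finset.mem_range.1 hj)
    refine (sub_one_sq_mul_ncard_mul_ncard_le m _ _).trans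
      (pow_le_pow_mul_half_pow two_le_natCast_card ?_)
    have hexp := choose_add_two_add_choose_add_le hσ hs (j := j) (e := d - s * j) (by grind)
    rwa [Nat.sub_add_cancel hsj] at hexp
  rw [Finset.mul_sum, mul_comm 2]
  refine (Finset.sum_le_sum hterm).trans ?_
  rw [← Finset.mul_sum]
  gcongr
  exact sum_half_pow_le_two _

theorem sub_one_sq_mul_ncard_mul_ncard_mul_ncard_le (hσ : 2 ≤ Nat.card σ) (d : ℕ) :
    ((Nat.card K : ℚ) - 1) ^ 2 * ((monicsOfTotalDegree m K 1).ncard *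
        (monicsOfTotalDegree m K 1).ncard * (monicsOfTotalDegree m K d).ncard) ≤
      (Nat.card K : ℚ) ^
        ((Nat.card σ + 2).choose (Nat.card σ) + (Nat.card σ + d).choose (Nat.card σ)) := by
  have hq := two_le_natCast_card (α := K)
  have hlinear := sub_one_sq_mul_ncard_mul_ncard_le (K := K) m 1 1
  have hle : ((monicsOfTotalDegree m K d).ncard : ℚ) ≤
      (Nat.card K : ℚ) ^ (Nat.card σ + d).choose (Nat.card σ) :=
    (le_mul_of_one_le_left (Nat.cast_nonneg _) (by linarith)).trans
      (sub_one_mul_ncard_monicsOfTotalDegree_le m d)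
  have hexp : (Nat.card σ + 1).choose (Nat.card σ) + (Nat.card σ + 1).choose (Nat.card σ) ≤
      (Nat.card σ + 2).choose (Nat.card σ) := by
    rw [choose_add_two, Nat.choose_succ_self_right]
    gcongr
    rw [Nat.le_div_iff_mul_le two_pos]
    nlinarith
  rw [← mul_assoc, pow_add]
  refine mul_le_mul (hlinear.trans ?_) hle (by positivity) (by positivity)
  exact pow_le_pow_right₀ (by linarith) hexp

theorem ncard_powerfulMonics_le_eta_add_sum [Nonempty σ] {s n : ℕ} (hs : 0 < s)
    (hn : 2 * s ≤ n) :
    ((powerfulMonics m K s n).ncard : ℚ) ≤ eta (Nat.card K) (Nat.card σ) n s +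
      ∑ j ∈ Finset.range ((n - 2 * s) / s + 1),
        ((monicsOfTotalDegree m K (j + 2)).ncard : ℚ) *
          (monicsOfTotalDegree m K (n - 2 * s - s * j)).ncard := by
  have hle := ncard_powerfulMonics_le (K := K) m hs n
  have hdiv : n / s = (n - 2 * s) / s + 1 + 1 := by
    conv_lhs => rw [← Nat.sub_add_cancel hn]
    rw [Nat.add_mul_div_right _ _ hs]
  have hdeg (j : ℕ) : n - s * (j + 1 + 1) = n - 2 * s - s * j := by
    rw [Nat.sub_sub]
    congr 1
    ring
  rw [hdiv, Finset.sum_range_succ', add_comm] at hle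
  simp only [hdeg, zero_add, mul_one] at hle
  rw [eta_eq_ncard_mul_ncard m (by lia)]
  exact_mod_cast hle

theorem eta_le_ncard_powerfulMonics_add [Nonempty σ] {s n : ℕ} (hs : 0 < s) (hn : 2 * s ≤ n) :
    eta (Nat.card K) (Nat.card σ) n s ≤ (powerfulMonics m K s n).ncard +
      ((monicsOfTotalDegree m K 1).ncard : ℚ) * (monicsOfTotalDegree m K 1).ncard *
        (monicsOfTotalDegree m K (n - 2 * s)).ncard := by
  have hle := ncard_mul_ncard_le_ncard_powerfulMonics_add (K := K) m s (n - 2 * s)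
  rw [Nat.add_sub_of_le hn, show s + (n - 2 * s) = n - s by lia] at hle
  rw [eta_eq_ncard_mul_ncard m (by lia)]
  exact_mod_cast hle

theorem sub_one_sq_mul_abs_ncard_powerfulMonics_sub_eta_le (hσ : 2 ≤ Nat.card σ) {s n : ℕ}
    (hs : 2 ≤ s) (hn : 2 * s ≤ n) (hns : (n, s) ≠ (6, 2)) :
    ((Nat.card K : ℚ) - 1) ^ 2 * |((powerfulMonics m K s n).ncard : ℚ) -
        eta (Nat.card K) (Nat.card σ) n s| ≤
      2 * (Nat.card K : ℚ) ^ ((Nat.card σ + 2).choose (Nat.card σ) +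
        (Nat.card σ + (n - 2 * s)).choose (Nat.card σ)) := by
  have : Nonempty σ := (Nat.card_pos_iff.1 (two_pos.trans_le hσ)).1
  have hsd : ¬(s = 2 ∧ n - 2 * s = 2) := by grind
  have htail := sub_one_sq_mul_sum_ncard_mul_ncard_le (K := K) m hσ hs hsd
  have hoverlap := sub_one_sq_mul_ncard_mul_ncard_mul_ncard_le (K := K) m hσ (n - 2 * s)
  have hnonneg : (0 : ℚ) ≤ (Nat.card K : ℚ) ^ ((Nat.card σ + 2).choose (Nat.card σ) +
      (Nat.card σ + (n - 2 * s)).choose (Nat.card σ)) := by positivity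
  rw [← abs_of_nonneg (sq_nonneg ((Nat.card K : ℚ) - 1)), ← abs_mul, mul_sub, abs_sub_le_iff,
    ← mul_sub, ← mul_sub]
  constructor
  · refine (mul_le_mul_of_nonneg_left ?_ (sq_nonneg _)).trans htail
    exact sub_le_iff_le_add'.2 (ncard_powerfulMonics_le_eta_add_sum m (by lia) hn)
  · refine (mul_le_mul_of_nonneg_left ?_ (sq_nonneg _)).trans (hoverlap.trans (by linarith))
    exact sub_le_iff_le_add'.2 (eta_le_ncard_powerfulMonics_add m (by lia) hn)

end Estimate

theorem Qcount_eq_ncard_powerfulMonics (F : Type) [Field F] (r n s : ℕ) :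
    Qcount F r n s = (powerfulMonics (MonomialOrder.degLex (σ := Fin r)) F s n).ncard := by
  simp only [Qcount, powerfulMonics, monicsOfTotalDegree, mvMonic_iff_degLex_monic,
    Set.mem_ofPred_eq, and_assoc]

theorem stmt5_general (q : ℕ) (F : Type) [Field F] [Finite F] (hq : Nat.card F = q)
    (r s n : ℕ) (hr : 2 ≤ r) (hs : 2 ≤ s) (hn : 2 * s ≤ n) (hns : (n, s) ≠ (6, 2)) :
    |(Qcount F r n s : ℚ) - eta q r n s| ≤
      eta q r n s * 6 * (q : ℚ) ^
        (-((Nat.choose (r + n - s) r : ℤ) - Nat.choose (r + n - 2 * s) r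
            - r * (r + 1) / 2)) := by
  subst hq
  have herror := sub_one_sq_mul_abs_ncard_powerfulMonics_sub_eta_le (K := F)
    (MonomialOrder.degLex (σ := Fin r)) (by rwa [Nat.card_fin]) hs hn hns
  rw [Nat.card_fin, ← Qcount_eq_ncard_powerfulMonics] at herror
  have hpos : (0 : ℚ) < (Nat.card F - 1) ^ 2 :=
    pow_pos (by linarith [two_le_natCast_card (α := F)]) 2
  exact le_of_mul_le_mul_left (herror.trans <|
    two_mul_pow_le_sub_one_sq_mul_eta_mul_zpow Finite.one_lt_card hr (by lia) hn) hpos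

theorem stmt5 (q : ℕ) (F : Type) [Field F] [Fintype F] (hq : Fintype.card F = q)
    (r s n : ℕ) (hr : 2 ≤ r) (hs : 2 ≤ s) (hn : 3 * s ≤ n) (hns : (n, s) ≠ (6, 2)) :
    |(Qcount F r n s : ℚ) - eta q r n s| ≤
      eta q r n s * 6 * (q : ℚ) ^
        (-((Nat.choose (r + n - s) r : ℤ) - Nat.choose (r + n - 2 * s) r
            - r * (r + 1) / 2)) :=
  stmt5_general q F (by rw [Nat.card_eq_fintype_card, hq]) r s n hr hs (by lia) hns
end

section
/- Let F_q be a finite field with q elements and characteristic p, let n ≥ 4 be a composite integer with smallest prime divisor ℓ, and suppose p does not divide n. Define α_n = 2·q^{ℓ + n/ℓ − 2} if n ≠ ℓ², and α_n = q^{2ℓ − 2} if n = ℓ². Then the number #D_n(F_q) of decomposable monic original polynomials of degree n over F_q satisfies |#D_n(F_q) − α_n| ≤ α_n·q^{−n/(3ℓ²)}, where the exponent n/(3ℓ²) is taken as a real number. -/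
open Polynomial

/-- The set of decomposable monic original polynomials of degree `n` over `F`:
monic, vanishing at 0, and of the form `g ∘ h` with `deg g, deg h ≥ 2`. -/
def Duniv (F : Type*) [CommRing F] (n : ℕ) : Set (Polynomial F) :=
  {f | f.Monic ∧ f.natDegree = n ∧ f.eval 0 = 0 ∧
    ∃ g h : Polynomial F, 2 ≤ g.natDegree ∧ 2 ≤ h.natDegree ∧ f = g.comp h}

/-- `alphaN q n` is `2 q^{ℓ + n/ℓ - 2}` if `n ≠ ℓ²` and `q^{2ℓ - 2}` if `n = ℓ²`, where `ℓ` is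
the smallest prime divisor of `n`. -/
noncomputable def alphaN (q n : ℕ) : ℝ :=
  if n = n.minFac ^ 2 then (q : ℝ) ^ (2 * n.minFac - 2)
  else 2 * (q : ℝ) ^ (n.minFac + n / n.minFac - 2)

/-
Normalising both factors of a decomposition shows that `D_n` is the union, over the factorisations
`n = k * d` with `k, d ≥ 2`, of the sets `D_{k,d}` of compositions `G ∘ H` with `G ∈ P_k` and
`H ∈ P_d`. If `p ∤ k`, then `(G, H)` is determined by `G ∘ H`, so `#D_{k,d} = q ^ (k + d - 2)`.

For `n = ℓ²` this is an exact count. Otherwise put `m = n / ℓ`; the exponent `k + d - 2` is largest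
for `D_{ℓ,m}` and `D_{m,ℓ}`, which together contribute `α_n` up to the size of their intersection.
Comparing top coefficients in `G ∘ H = g ∘ h` shows that the intersection has at most
`q ^ (2ℓ - 3 + ⌊m / ℓ⌋)` elements. For the other factorisations, the identity
`ℓ (ℓ + m - k - d) = (k - ℓ)(d - ℓ)` bounds `k + d` away from `ℓ + m`, and since the sum `k + d`
determines `{k, d}`, the remaining terms are dominated by a geometric series.
-/

section Degree

variable {R : Type*}

lemma coeff_eq_coeff_of_monic [Semiring R] {f g : R[X]} (hf : f.Monic) (hg : g.Monic)
    (hfg : f.natDegree = g.natDegree) {i : ℕ} (hi : f.natDegree ≤ i) : f.coeff i = g.coeff i := by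
  rcases hi.eq_or_lt with rfl | hi
  · rw [hf.coeff_natDegree, hfg, hg.coeff_natDegree]
  · rw [coeff_eq_zero_of_natDegree_lt hi, coeff_eq_zero_of_natDegree_lt (hfg ▸ hi)]

lemma eq_of_comp_eq_comp [CommRing R] [NoZeroDivisors R] {f g h : R[X]} (hh : h.natDegree ≠ 0)
    (hfg : f.comp h = g.comp h) : f = g := by
  have h_sub : (f - g).comp h = 0 := by rw [sub_comp, hfg, sub_self]
  rcases comp_eq_zero_iff.mp h_sub with h_eq | ⟨-, h_const⟩
  · exact sub_eq_zero.mp h_eq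
  · exact absurd (h_const ▸ natDegree_C _) hh

lemma eq_of_natDegree_pow_sub_pow_lt [CommRing R] [NoZeroDivisors R] {f g : R[X]} {k : ℕ}
    (hf : f.Monic) (hg : g.Monic) (hfg : f.natDegree = g.natDegree) (hk : (k : R) ≠ 0)
    (h : (f ^ k - g ^ k).natDegree < (k - 1) * f.natDegree) : f = g := by
  have h_coeff : (∑ i ∈ Finset.range k, f ^ i * g ^ (k - 1 - i)).coeff ((k - 1) * f.natDegree)
      = k := by
    rw [finsetSum_coeff, Finset.sum_congr rfl (g := fun _ => (1 : R)) fun i hi => ?_]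
    · simp
    have h_deg : (f ^ i * g ^ (k - 1 - i)).natDegree = (k - 1) * f.natDegree := by
      rw [(hf.pow _).natDegree_mul (hg.pow _), hf.natDegree_pow, hg.natDegree_pow, ← hfg, ← add_mul,
        Nat.add_sub_cancel' (Nat.le_sub_one_of_lt (Finset.mem_range.mp hi))]
    rw [← h_deg]
    exact ((hf.pow _).mul (hg.pow _)).coeff_natDegree
  have h_le := le_natDegree_of_ne_zero (h_coeff ▸ hk)
  by_contra hne
  rw [← (Commute.all f g).geom_sum₂_mul k, natDegree_mul _ (sub_ne_zero.mpr hne)] at h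
  · omega
  · intro h_zero
    rw [h_zero, coeff_zero] at h_coeff
    exact hk h_coeff.symm

lemma natDegree_comp_sub_pow_le [CommRing R] {G : R[X]} (hG : G.Monic) (H : R[X]) {c : R}
    (hc : G.nextCoeff = G.natDegree * c) :
    (G.comp H - (H + C c) ^ G.natDegree).natDegree ≤ (G.natDegree - 2) * H.natDegree := by
  nontriviality R
  set k := G.natDegree with hk
  have h_monic : ((X + C c) ^ k).Monic := (monic_X_add_C c).pow k
  have h_deg : ((X + C c) ^ k).natDegree = k := natDegree_pow_X_add_C k c
  have h_le : (G - (X + C c) ^ k).natDegree ≤ k - 2 := by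
    rw [natDegree_le_iff_coeff_eq_zero]
    intro i hi
    rw [coeff_sub, sub_eq_zero]
    rcases le_or_gt k i with h_ge | h_lt
    · exact coeff_eq_coeff_of_monic hG h_monic h_deg.symm h_ge
    obtain rfl : i = k - 1 := by omega
    have h_next : ((X + C c) ^ k).nextCoeff = k * c := by
      rw [(monic_X_add_C c).nextCoeff_pow, nextCoeff_X_add_C, nsmul_eq_mul]
    rw [hk, ← nextCoeff_of_natDegree_pos (by omega), hc, ← h_next,
      nextCoeff_of_natDegree_pos (by omega), h_deg]
  calc (G.comp H - (H + C c) ^ k).natDegree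
      = ((G - (X + C c) ^ k).comp H).natDegree := by simp
    _ ≤ (G - (X + C c) ^ k).natDegree * H.natDegree := natDegree_comp_le
    _ ≤ (k - 2) * H.natDegree := Nat.mul_le_mul_right _ h_le

end Degree

section MonicOriginal

/-- `P_n(R)`: the monic original polynomials of degree `n`. -/
def monicOriginal (R : Type*) [Semiring R] (n : ℕ) : Set R[X] :=
  {f | f.Monic ∧ f.natDegree = n ∧ f.eval 0 = 0}

variable {R : Type*}

lemma image_X_mul_monic [Semiring R] [Nontrivial R] (n : ℕ) :
    (X * ·) '' {g : R[X] | g.Monic ∧ g.natDegree = n} = monicOriginal R (n + 1) := by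
  ext f
  constructor
  · rintro ⟨g, ⟨hg, rfl⟩, rfl⟩
    exact ⟨monic_X.mul hg, natDegree_X_mul hg.ne_zero, by simp [← coeff_zero_eq_eval_zero]⟩
  · rintro ⟨hf, h_deg, h_zero⟩
    obtain ⟨g, rfl⟩ := X_dvd_iff.mpr ((coeff_zero_eq_eval_zero f).trans h_zero)
    have hg : g.Monic := monic_X.of_mul_monic_left hf
    exact ⟨g, ⟨hg, by rwa [natDegree_X_mul hg.ne_zero, Nat.succ_inj] at h_deg⟩, rfl⟩

lemma ncard_monic_natDegree_eq (R : Type*) [CommRing R] [Nontrivial R] (n : ℕ) :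
    {g : R[X] | g.Monic ∧ g.natDegree = n}.ncard = Nat.card R ^ n := by
  rw [← Nat.card_coe_set_eq]
  refine (Nat.card_congr ((monicEquivDegreeLT n).trans (degreeLTEquiv R n).toEquiv)).trans ?_
  rw [Nat.card_fun, Nat.card_fin]

lemma ncard_monicOriginal (R : Type*) [CommRing R] [Nontrivial R] {n : ℕ} (hn : n ≠ 0) :
    (monicOriginal R n).ncard = Nat.card R ^ (n - 1) := by
  obtain ⟨n, rfl⟩ := Nat.exists_eq_succ_of_ne_zero hn
  rw [← image_X_mul_monic, (Function.Injective.injOn monic_X.isRegular.left).ncard_image,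
    ncard_monic_natDegree_eq, Nat.succ_sub_one]

lemma finite_monicOriginal (R : Type*) [CommRing R] [Nontrivial R] [Finite R] {n : ℕ}
    (hn : n ≠ 0) : (monicOriginal R n).Finite :=
  Set.finite_of_ncard_ne_zero <|
    ncard_monicOriginal R hn ▸ pow_ne_zero _ (Nat.card_ne_zero.mpr ⟨inferInstance, inferInstance⟩)

lemma eq_of_mem_monicOriginal [Semiring R] {n : ℕ} {f g : R[X]} (hf : f ∈ monicOriginal R n)
    (hg : g ∈ monicOriginal R n) (h : ∀ i < n, i ≠ 0 → f.coeff i = g.coeff i) : f = g := by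
  ext i
  rcases eq_or_ne i 0 with rfl | h_ne
  · rw [coeff_zero_eq_eval_zero, coeff_zero_eq_eval_zero, hf.2.2, hg.2.2]
  rcases lt_or_ge i n with h_lt | h_ge
  · exact h i h_lt h_ne
  · exact coeff_eq_coeff_of_monic hf.1 hg.1 (hf.2.1.trans hg.2.1.symm) (hf.2.1.le.trans h_ge)

end MonicOriginal

section Composition

/-- The set of compositions `G ∘ H` with `G ∈ P_k(R)` and `H ∈ P_d(R)`; by `mem_Duniv_iff` these
sets make up the decomposable polynomials. -/
def monicOriginalComp (R : Type*) [Semiring R] (k d : ℕ) : Set R[X] :=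
  Set.image2 comp (monicOriginal R k) (monicOriginal R d)

lemma comp_mem_monicOriginal {R : Type*} [CommRing R] [NoZeroDivisors R] {k d : ℕ} {G H : R[X]}
    (hG : G ∈ monicOriginal R k) (hH : H ∈ monicOriginal R d) (hd : d ≠ 0) :
    G.comp H ∈ monicOriginal R (k * d) :=
  ⟨hG.1.comp hH.1 (hH.2.1 ▸ hd), by rw [natDegree_comp, hG.2.1, hH.2.1],
    by rw [eval_comp, hH.2.2, hG.2.2]⟩

variable {F : Type*} [Field F] {k d : ℕ} {G G' H H' : F[X]}

-- `G ∘ H` agrees with `(H + c)ᵏ` in the degrees above `(k - 2)d`, so its top coefficients determine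
-- `H + c`; then `c` is read off at `0`.
lemma right_eq_and_coeff_eq_of_natDegree_comp_sub_comp_lt (hk : (k : F) ≠ 0)
    (hG : G ∈ monicOriginal F k) (hG' : G' ∈ monicOriginal F k) (hH : H ∈ monicOriginal F d)
    (hH' : H' ∈ monicOriginal F d) (h : (G.comp H - G'.comp H').natDegree < (k - 1) * d) :
    H = H' ∧ G.coeff (k - 1) = G'.coeff (k - 1) := by
  obtain ⟨hk1, hd⟩ := CanonicallyOrderedAdd.mul_pos.mp (Nat.zero_lt_of_lt h)
  have h_lt : (k - 2) * d < (k - 1) * d := Nat.mul_lt_mul_of_pos_right (by omega) hd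
  have h_add (P : F[X]) (a : F) (hP : P ∈ monicOriginal F d) :
      (P + C a).Monic ∧ (P + C a).natDegree = d := by
    refine ⟨hP.1.add_of_left (degree_C_le.trans_lt ?_), natDegree_add_C.trans hP.2.1⟩
    rwa [← natDegree_pos_iff_degree_pos, hP.2.1]
  have h_pow (P Q : F[X]) (hP : P ∈ monicOriginal F k) (hQ : Q ∈ monicOriginal F d) :
      (P.comp Q - (Q + C (P.nextCoeff / k)) ^ k).natDegree < (k - 1) * d := by
    have := natDegree_comp_sub_pow_le hP.1 Q (c := P.nextCoeff / k)
      (by rw [hP.2.1, mul_div_cancel₀ _ hk])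
    rw [hP.2.1, hQ.2.1] at this
    exact this.trans_lt h_lt
  set c := G.nextCoeff / (k : F) with hc
  set c' := G'.nextCoeff / (k : F) with hc'
  have h_shift : H + C c = H' + C c' := by
    refine eq_of_natDegree_pow_sub_pow_lt (h_add H c hH).1 (h_add H' c' hH').1
      ((h_add H c hH).2.trans (h_add H' c' hH').2.symm) hk ?_
    rw [(h_add H c hH).2, show (H + C c) ^ k - (H' + C c') ^ k = (G.comp H - G'.comp H')
      - ((G.comp H - (H + C c) ^ k) - (G'.comp H' - (H' + C c') ^ k)) by ring]
    exact (natDegree_sub_le _ _).trans_lt (max_lt h ((natDegree_sub_le _ _).trans_lt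
      (max_lt (h_pow G H hG hH) (h_pow G' H' hG' hH'))))
  have h_const : c = c' := by simpa [hH.2.2, hH'.2.2] using congrArg (eval 0) h_shift
  refine ⟨add_right_cancel (h_const ▸ h_shift), ?_⟩
  rwa [hc, hc', div_left_inj' hk, nextCoeff_of_natDegree_pos (by rw [hG.2.1]; omega),
    nextCoeff_of_natDegree_pos (by rw [hG'.2.1]; omega), hG.2.1, hG'.2.1] at h_const

lemma injOn_comp_monicOriginal (hk : (k : F) ≠ 0) (hk2 : 2 ≤ k) (hd : d ≠ 0) :
    Set.InjOn (Function.uncurry comp) (monicOriginal F k ×ˢ monicOriginal F d) := by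
  rintro ⟨G, H⟩ ⟨hG, hH⟩ ⟨G', H'⟩ ⟨hG', hH'⟩ (h : G.comp H = G'.comp H')
  obtain ⟨rfl, -⟩ : H = H' ∧ _ :=
    right_eq_and_coeff_eq_of_natDegree_comp_sub_comp_lt hk hG hG' hH hH' <| by
      rw [h, sub_self, natDegree_zero]
      exact Nat.mul_pos (by omega) (by omega)
  rw [eq_of_comp_eq_comp (hH.2.1 ▸ hd) h]

lemma comp_mem_monicOriginalComp {g h : F[X]} (hh : h.natDegree ≠ 0) (h_monic : (g.comp h).Monic)
    (h_zero : (g.comp h).eval 0 = 0) :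
    g.comp h ∈ monicOriginalComp F g.natDegree h.natDegree := by
  have hc : h.leadingCoeff ≠ 0 := leadingCoeff_ne_zero.mpr (ne_zero_of_natDegree_gt hh.bot_lt)
  set c := h.leadingCoeff
  set b := h.eval 0
  set H : F[X] := C c⁻¹ * (h - C b)
  set G : F[X] := g.comp (C c * X + C b) with hG_def
  have hH_deg : H.natDegree = h.natDegree := by
    rw [natDegree_C_mul (inv_ne_zero hc), natDegree_sub_C]
  have hH_monic : H.Monic := by
    rw [Monic, leadingCoeff, hH_deg, coeff_C_mul, coeff_sub, coeff_C_of_ne_zero hh, sub_zero]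
    exact inv_mul_cancel₀ hc
  have hH_zero : H.eval 0 = 0 := by simp [H, b]
  have hG_deg : G.natDegree = g.natDegree := by rw [natDegree_comp, natDegree_linear hc, mul_one]
  have h_comp : G.comp H = g.comp h := by
    have h_inner : (C c * X + C b).comp H = h := by
      simp [H, ← mul_assoc, ← C_mul, mul_inv_cancel₀ hc]
    rw [hG_def, comp_assoc, h_inner]
  have hG_monic : G.Monic := by
    have h_lead := leadingCoeff_comp (p := G) (hH_deg ▸ hh)
    rwa [h_comp, h_monic.leadingCoeff, hH_monic.leadingCoeff, one_pow, mul_one, eq_comm] at h_lead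
  have hG_zero : G.eval 0 = 0 := by rwa [← h_comp, eval_comp, hH_zero] at h_zero
  exact ⟨G, ⟨hG_monic, hG_deg, hG_zero⟩, H, ⟨hH_monic, hH_deg, hH_zero⟩, h_comp⟩

lemma mem_Duniv_iff {n : ℕ} {f : F[X]} :
    f ∈ Duniv F n ↔ ∃ k d, 2 ≤ k ∧ 2 ≤ d ∧ k * d = n ∧ f ∈ monicOriginalComp F k d := by
  constructor
  · rintro ⟨h_monic, rfl, h_zero, g, h, hg, hh, rfl⟩
    exact ⟨g.natDegree, h.natDegree, hg, hh, natDegree_comp.symm,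
      comp_mem_monicOriginalComp (by omega) h_monic h_zero⟩
  · rintro ⟨k, d, hk, hd, rfl, G, hG, H, hH, rfl⟩
    obtain ⟨h_monic, h_deg, h_zero⟩ := comp_mem_monicOriginal hG hH (by omega)
    exact ⟨h_monic, h_deg, h_zero, G, H, hG.2.1.symm ▸ hk, hH.2.1.symm ▸ hd, rfl⟩

end Composition

section Counting

variable {F : Type*} [Field F] {k d : ℕ}

lemma ncard_prod_monicOriginal (F : Type*) [Field F] (hk : k ≠ 0) (hd : d ≠ 0) :
    (monicOriginal F k ×ˢ monicOriginal F d).ncard = Nat.card F ^ (k + d - 2) := by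
  rw [Set.ncard_prod, ncard_monicOriginal F hk, ncard_monicOriginal F hd, ← pow_add]
  congr 1
  omega

lemma ncard_monicOriginalComp (hk : (k : F) ≠ 0) (hk2 : 2 ≤ k) (hd : d ≠ 0) :
    (monicOriginalComp F k d).ncard = Nat.card F ^ (k + d - 2) := by
  rw [monicOriginalComp, ← Set.image_uncurry_prod,
    (injOn_comp_monicOriginal hk hk2 hd).ncard_image, ncard_prod_monicOriginal F (by omega) hd]

variable [Finite F]

lemma finite_monicOriginalComp (hk : k ≠ 0) (hd : d ≠ 0) : (monicOriginalComp F k d).Finite :=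
  (finite_monicOriginal F hk).image2 _ (finite_monicOriginal F hd)

lemma ncard_monicOriginalComp_le (hk : k ≠ 0) (hd : d ≠ 0) :
    (monicOriginalComp F k d).ncard ≤ Nat.card F ^ (k + d - 2) := by
  rw [monicOriginalComp, ← Set.image_uncurry_prod, ← ncard_prod_monicOriginal F hk hd]
  exact Set.ncard_image_le ((finite_monicOriginal F hk).prod (finite_monicOriginal F hd))


lemma natDegree_comp_sub_comp_lt {R : Type*} [CommRing R] {l m : ℕ} (hl : 2 ≤ l) (hm : m ≠ 0)
    {g g' h : R[X]} (hg : g ∈ monicOriginal R m) (hg' : g' ∈ monicOriginal R m)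
    (hh : h.natDegree = l) (h_coeff : ∀ i < m, m - m / l ≤ i → g.coeff i = g'.coeff i) :
    (g.comp h - g'.comp h).natDegree < (l - 1) * m := by
  have h_sub : (g - g').natDegree ≤ m - m / l - 1 := by
    rw [natDegree_le_iff_coeff_eq_zero]
    intro i hi
    rw [coeff_sub, sub_eq_zero]
    rcases lt_or_ge i m with h_lt | h_ge
    · exact h_coeff i h_lt (by omega)
    · exact coeff_eq_coeff_of_monic hg.1 hg'.1 (hg.2.1.trans hg'.2.1.symm) (hg.2.1.le.trans h_ge)
  have h_div : m < l * (m / l + 1) := Nat.lt_mul_div_succ m (by omega)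
  have h_lt : m / l < m := Nat.div_lt_self (by omega) (by omega)
  calc (g.comp h - g'.comp h).natDegree
      = ((g - g').comp h).natDegree := by rw [sub_comp]
    _ ≤ (g - g').natDegree * l := hh ▸ natDegree_comp_le
    _ ≤ (m - m / l - 1) * l := Nat.mul_le_mul_right l h_sub
    _ < (l - 1) * m := by
      have h_left : (m - m / l - 1) * l + (m / l + 1) * l = m * l := by
        rw [← add_mul]; congr 1; omega
      have h_right : (l - 1) * m + m = l * m := by
        rw [← Nat.succ_mul]; congr 1; omega
      linarith

-- If `f = G ∘ H = g ∘ h`, then `h` and the `m / l` top coefficients of `g` determine `f` in degrees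
-- `≥ (l - 1)m`, hence `H` and the top coefficient of `G`; `l - 2` coefficients of `G` remain free.
lemma ncard_monicOriginalComp_inter_le {l m : ℕ} (hl : (l : F) ≠ 0) (hl2 : 2 ≤ l) (hm : m ≠ 0) :
    (monicOriginalComp F l m ∩ monicOriginalComp F m l).ncard
      ≤ Nat.card F ^ ((l - 1) + m / l + (l - 2)) := by
  have h_left (f : F[X]) (hf : f ∈ monicOriginalComp F l m ∩ monicOriginalComp F m l) :
      ∃ G ∈ monicOriginal F l, ∃ H ∈ monicOriginal F m, G.comp H = f := hf.1
  have h_right (f : F[X]) (hf : f ∈ monicOriginalComp F l m ∩ monicOriginalComp F m l) :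
      ∃ g ∈ monicOriginal F m, ∃ h ∈ monicOriginal F l, g.comp h = f := hf.2
  choose! G hG H hH hGH using h_left
  choose! g hg h hh hgh using h_right
  let φ (f : F[X]) : F[X] × (Fin (m / l) → F) × (Fin (l - 2) → F) :=
    (h f, fun i => (g f).coeff (m - m / l + i), fun i => (G f).coeff (i + 1))
  have h_maps : Set.MapsTo φ (monicOriginalComp F l m ∩ monicOriginalComp F m l)
      (monicOriginal F l ×ˢ Set.univ) := fun f hf => ⟨hh f hf, trivial⟩
  have h_inj : Set.InjOn φ (monicOriginalComp F l m ∩ monicOriginalComp F m l) := by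
    intro f hf f' hf' h_eq
    simp only [φ, Prod.mk.injEq] at h_eq
    obtain ⟨h_inner, h_top, h_low⟩ := h_eq
    have h_lt : ((G f).comp (H f) - (G f').comp (H f')).natDegree < (l - 1) * m := by
      rw [hGH f hf, hGH f' hf', ← hgh f hf, ← hgh f' hf', ← h_inner]
      refine natDegree_comp_sub_comp_lt hl2 hm (hg f hf) (hg f' hf') (hh f hf).2.1
        fun i _ hi' => ?_
      simpa [Nat.add_sub_cancel' hi'] using congrFun h_top ⟨i - (m - m / l), by omega⟩
    obtain ⟨hH_eq, hG_top⟩ := right_eq_and_coeff_eq_of_natDegree_comp_sub_comp_lt hl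
      (hG f hf) (hG f' hf') (hH f hf) (hH f' hf') h_lt
    have hG_eq : G f = G f' := by
      refine eq_of_mem_monicOriginal (hG f hf) (hG f' hf') fun i hi hi0 => ?_
      rcases (Nat.le_sub_one_of_lt hi).eq_or_lt with rfl | hi1
      · exact hG_top
      · simpa [Nat.sub_add_cancel (Nat.pos_of_ne_zero hi0)] using
          congrFun h_low ⟨i - 1, by omega⟩
    rw [← hGH f hf, ← hGH f' hf', hG_eq, hH_eq]
  have h_fin : (monicOriginal F l).Finite := finite_monicOriginal F (by omega)
  refine (Set.ncard_le_ncard_of_injOn φ h_maps h_inj (h_fin.prod Set.finite_univ)).trans_eq ?_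
  rw [Set.ncard_prod, ncard_monicOriginal F (by omega), Set.ncard_univ, Nat.card_prod,
    Nat.card_fun, Nat.card_fun, Nat.card_fin, Nat.card_fin, pow_add, pow_add, mul_assoc]

end Counting

section FactorPairs

/-- The ordered factorisations `n = k * d` with both factors larger than `l`. For `l` the smallest
prime divisor of `n = l * m`, these are the ones other than `l * m` and `m * l`. -/
def factorPairsGT (l n : ℕ) : Finset (ℕ × ℕ) :=
  n.divisorsAntidiagonal.filter fun x => l < x.1 ∧ l < x.2

variable {l m n k d : ℕ}

lemma mem_factorPairsGT {x : ℕ × ℕ} :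
    x ∈ factorPairsGT l n ↔ x.1 * x.2 = n ∧ l < x.1 ∧ l < x.2 := by
  rw [factorPairsGT, Finset.mem_filter, Nat.mem_divisorsAntidiagonal]
  refine ⟨fun ⟨h, h_gt⟩ => ⟨h.1, h_gt⟩, fun ⟨h, h_gt⟩ => ⟨⟨h, h ▸ ?_⟩, h_gt⟩⟩
  exact mul_ne_zero (by omega) (by omega)

lemma eq_or_eq_swap_of_add_eq_of_mul_eq {x y : ℕ × ℕ} (h_add : x.1 + x.2 = y.1 + y.2)
    (h_mul : x.1 * x.2 = y.1 * y.2) : x = y ∨ x = y.swap := by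
  have h_root : ((x.1 : ℤ) - y.1) * (x.1 - y.2) = 0 := by
    zify at h_add h_mul
    linear_combination (x.1 : ℤ) * h_add - h_mul
  rcases mul_eq_zero.mp h_root with h | h
  · exact .inl (Prod.ext (by omega) (by omega))
  · exact .inr (Prod.ext (by rw [Prod.fst_swap]; omega) (by rw [Prod.snd_swap]; omega))

-- The exponents `k + d - 2` are distinct on the pairs with `k ≤ d`, and on those with `d < k`, so
-- each half of the sum is less than the next power of `q`.
lemma sum_pow_factorPairsGT_le_two_mul_pow {q K : ℕ} (hq : 2 ≤ q)
    (hK : ∀ x ∈ factorPairsGT l n, x.1 + x.2 - 2 < K) :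
    ∑ x ∈ factorPairsGT l n, q ^ (x.1 + x.2 - 2) ≤ 2 * q ^ K := by
  have h_half (s : Finset (ℕ × ℕ)) (hs : s ⊆ factorPairsGT l n)
      (h_inj : ∀ x ∈ s, x.swap ∈ s → x = x.swap) : ∑ x ∈ s, q ^ (x.1 + x.2 - 2) ≤ q ^ K := by
    have h_injOn : Set.InjOn (fun x : ℕ × ℕ => x.1 + x.2 - 2) s := by
      intro x hx y hy (h_eq : x.1 + x.2 - 2 = y.1 + y.2 - 2)
      have hx' := mem_factorPairsGT.mp (hs hx)
      have hy' := mem_factorPairsGT.mp (hs hy)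
      rcases eq_or_eq_swap_of_add_eq_of_mul_eq (by omega) (hx'.1.trans hy'.1.symm) with rfl | rfl
      · rfl
      · exact (h_inj y hy hx).symm
    rw [← Finset.sum_image (f := (q ^ ·)) h_injOn]
    exact (Nat.geomSum_lt hq (Finset.forall_mem_image.mpr fun x hx => hK x (hs hx))).le
  rw [← Finset.sum_filter_add_sum_filter_not _ (fun x => x.1 ≤ x.2), two_mul]
  refine add_le_add (h_half _ (Finset.filter_subset _ _) fun x hx hx' => ?_)
    (h_half _ (Finset.filter_subset _ _) fun x hx hx' => ?_) <;>
  · simp only [Finset.mem_filter, Prod.fst_swap, Prod.snd_swap] at hx hx'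
    exact Prod.ext (by simp only [Prod.fst_swap]; omega) (by simp only [Prod.snd_swap]; omega)

lemma sum_pow_factorPairsGT_le_two_mul_rpow {q : ℕ} (hq : 2 ≤ q) {r : ℝ} (hr : 0 ≤ r)
    (h : ∀ x ∈ factorPairsGT l n, (x.1 + x.2 - 1 : ℝ) ≤ r) :
    ∑ x ∈ factorPairsGT l n, (q : ℝ) ^ (x.1 + x.2 - 2) ≤ 2 * (q : ℝ) ^ r := by
  have h_lt : ∀ x ∈ factorPairsGT l n, x.1 + x.2 - 2 < ⌊r⌋₊ := by
    intro x hx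
    have hx' := mem_factorPairsGT.mp hx
    have h_le : x.1 + x.2 - 1 ≤ ⌊r⌋₊ := by
      refine Nat.le_floor ?_
      rw [Nat.cast_sub (by omega)]
      exact_mod_cast h x hx
    omega
  calc ∑ x ∈ factorPairsGT l n, (q : ℝ) ^ (x.1 + x.2 - 2)
      ≤ 2 * (q : ℝ) ^ ⌊r⌋₊ := mod_cast sum_pow_factorPairsGT_le_two_mul_pow hq h_lt
    _ = 2 * (q : ℝ) ^ (⌊r⌋₊ : ℝ) := by rw [Real.rpow_natCast]
    _ ≤ 2 * (q : ℝ) ^ r := by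
      gcongr
      · exact_mod_cast one_le_two.trans hq
      · exact Nat.floor_le hr

lemma minFac_sq_le_of_dvd_of_lt (hn : n.minFac ∣ k) (hkn : k ∣ n) (hk : n.minFac < k) :
    n.minFac ^ 2 ≤ k := by
  obtain ⟨j, rfl⟩ := hn
  have hj : 2 ≤ j := by
    by_contra! h
    interval_cases j <;> omega
  rw [sq]
  exact Nat.mul_le_mul_left _ (Nat.minFac_le_of_dvd hj ((Dvd.intro_left _ rfl).trans hkn))

lemma minFac_sq_le_of_le (h_mul : k * d = n) (hkd : k ≤ d) (hk : n.minFac < k) :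
    n.minFac ^ 2 ≤ d := by
  subst h_mul
  have h_prime : (k * d).minFac.Prime := Nat.minFac_prime fun h => by
    rw [h, Nat.minFac_one, Nat.eq_one_of_mul_eq_one_right h] at hk
    exact lt_irrefl _ hk
  rcases h_prime.dvd_mul.mp (Nat.minFac_dvd _) with h_dvd | h_dvd
  · exact (minFac_sq_le_of_dvd_of_lt h_dvd (Dvd.intro d rfl) hk).trans hkd
  · exact minFac_sq_le_of_dvd_of_lt h_dvd (Dvd.intro_left k rfl) (hk.trans_le hkd)

lemma minFac_add_two_le (hn : n.minFac ≠ 2) (hkn : k ∣ n) (hk : n.minFac < k) :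
    n.minFac + 2 ≤ k := by
  have h_odd : ¬ Even n := fun h => hn ((Nat.minFac_eq_two_iff n).mpr h.two_dvd)
  have h_ne : n.minFac + 1 ≠ k := by
    rintro rfl
    rcases Nat.even_or_odd n.minFac with h | h
    · exact h_odd (h.trans_dvd (Nat.minFac_dvd n))
    · exact h_odd (h.add_one.trans_dvd hkn)
  omega

lemma add_sub_one_le_of_sq_le (hl : 3 ≤ l) (h_mul : k * d = l * m) (hk : l + 2 ≤ k)
    (hd : l ^ 2 ≤ d) : (k + d - 1 : ℝ) ≤ l + m - 2 - m / (3 * l) := by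
  have hl' : (3 : ℝ) ≤ l := mod_cast hl
  have h_mul' : (k * d : ℝ) = l * m := mod_cast h_mul
  obtain ⟨a, ha⟩ : ∃ a : ℝ, a = k - l := ⟨_, rfl⟩
  obtain ⟨b, hb⟩ : ∃ b : ℝ, b = d - l := ⟨_, rfl⟩
  have ha2 : 2 ≤ a := by
    have : (l + 2 : ℝ) ≤ k := mod_cast hk
    linarith
  have hb2 : (l : ℝ) * (l - 1) ≤ b := by
    have : (l ^ 2 : ℝ) ≤ d := mod_cast hd
    linarith
  have h_excess : l * (l + m - k - d : ℝ) = a * b := by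
    rw [ha, hb]
    linear_combination -h_mul'
  have h_main : 0 ≤ (3 * l - 1) * (a * b) - l * (a + b) - 4 * (l : ℝ) ^ 2 := by
    have hb_l : (l : ℝ) ≤ (3 * l - 1) * b := by nlinarith
    have h_a : 0 ≤ (a - 2) * ((3 * l - 1) * b - l) := mul_nonneg (by linarith) (by linarith)
    have h_b : 0 ≤ (5 * l - 2) * (b - l * (l - 1) : ℝ) := mul_nonneg (by linarith) (by linarith)
    have h_l : 0 ≤ (l : ℝ) ^ 2 * (5 * l - 11) := mul_nonneg (by positivity) (by linarith)
    linarith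
  have h_div : (m : ℝ) / (3 * l) ≤ l + m - 1 - k - d := by
    rw [div_le_iff₀ (by positivity)]
    refine le_of_mul_le_mul_left ?_ (by linarith : (0 : ℝ) < l)
    have hkd : (l : ℝ) * m = (a + l) * (b + l) := by rw [← h_mul', ha, hb]; ring
    linear_combination h_main - 3 * l * h_excess + hkd
  linarith

lemma add_sub_one_le_of_mem_factorPairsGT (hl : 3 ≤ l) (h_min : (l * m).minFac = l)
    {x : ℕ × ℕ} (hx : x ∈ factorPairsGT l (l * m)) :
    (x.1 + x.2 - 1 : ℝ) ≤ l + m - 2 - m / (3 * l) := by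
  obtain ⟨h_mul, h1, h2⟩ := mem_factorPairsGT.mp hx
  have h_two : (l * m).minFac ≠ 2 := by omega
  have h1' := minFac_add_two_le h_two (h_mul ▸ Dvd.intro _ rfl) (h_min.symm ▸ h1)
  have h2' := minFac_add_two_le h_two (h_mul ▸ Dvd.intro_left _ rfl) (h_min.symm ▸ h2)
  rcases le_total x.1 x.2 with h_le | h_le
  · have h_sq := minFac_sq_le_of_le h_mul h_le (h_min.symm ▸ h1)
    rw [h_min] at h1' h_sq
    exact add_sub_one_le_of_sq_le hl h_mul h1' h_sq
  · have h_sq := minFac_sq_le_of_le ((mul_comm _ _).trans h_mul) h_le (h_min.symm ▸ h2)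
    rw [h_min] at h2' h_sq
    rw [add_comm (x.1 : ℝ)]
    exact add_sub_one_le_of_sq_le hl ((mul_comm _ _).trans h_mul) h2' h_sq

lemma three_mul_add_le_of_mem_factorPairsGT_two {x : ℕ × ℕ} (hx : x ∈ factorPairsGT 2 (2 * m)) :
    3 * (x.1 + x.2 : ℝ) ≤ 2 * m + 9 := by
  obtain ⟨h_mul, h1, h2⟩ := mem_factorPairsGT.mp hx
  have h_mul' : (x.1 * x.2 : ℝ) = 2 * m := mod_cast h_mul
  have h1' : (3 : ℝ) ≤ x.1 := mod_cast h1
  have h2' : (3 : ℝ) ≤ x.2 := mod_cast h2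
  linarith [mul_nonneg (sub_nonneg.mpr h1') (sub_nonneg.mpr h2')]

lemma six_le_of_mem_factorPairsGT_two {x : ℕ × ℕ} (hx : x ∈ factorPairsGT 2 (2 * m)) : 6 ≤ m := by
  by_contra! h
  have h_empty : factorPairsGT 2 (2 * m) = ∅ := by interval_cases m <;> decide
  exact Finset.notMem_empty x (h_empty ▸ hx)

lemma card_factorPairsGT_two_le (hm : m < 12) : (factorPairsGT 2 (2 * m)).card ≤ 2 := by
  interval_cases m <;> decide

-- The factorisation `12 = 3 * 4` attains the bound, so the distinctness of the exponents is not
-- enough for small `m`.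
lemma sum_pow_factorPairsGT_two_le {q : ℕ} (hq : 2 ≤ q) (m : ℕ) :
    ∑ x ∈ factorPairsGT 2 (2 * m), (q : ℝ) ^ (x.1 + x.2 - 2) ≤ 2 * (q : ℝ) ^ (m - m / 6 : ℝ) := by
  rcases lt_or_ge m 12 with h_lt | h_ge
  · have h_term : ∀ x ∈ factorPairsGT 2 (2 * m),
        (q : ℝ) ^ (x.1 + x.2 - 2) ≤ (q : ℝ) ^ (m - m / 6 : ℝ) := by
      intro x hx
      have h_sum := three_mul_add_le_of_mem_factorPairsGT_two hx
      have h6 : (6 : ℝ) ≤ m := mod_cast six_le_of_mem_factorPairsGT_two hx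
      obtain ⟨-, h1, h2⟩ := mem_factorPairsGT.mp hx
      rw [← Real.rpow_natCast, Nat.cast_sub (by omega)]
      push_cast
      exact Real.rpow_le_rpow_of_exponent_le (mod_cast one_le_two.trans hq) (by linarith)
    calc ∑ x ∈ factorPairsGT 2 (2 * m), (q : ℝ) ^ (x.1 + x.2 - 2)
        ≤ (factorPairsGT 2 (2 * m)).card • (q : ℝ) ^ (m - m / 6 : ℝ) :=
          Finset.sum_le_card_nsmul _ _ _ h_term
      _ ≤ 2 * (q : ℝ) ^ (m - m / 6 : ℝ) := by
          rw [nsmul_eq_mul]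
          gcongr
          exact_mod_cast card_factorPairsGT_two_le h_lt
  · have h12 : (12 : ℝ) ≤ m := mod_cast h_ge
    refine sum_pow_factorPairsGT_le_two_mul_rpow hq (by linarith) fun x hx => ?_
    linarith [three_mul_add_le_of_mem_factorPairsGT_two hx]

lemma sum_pow_factorPairsGT_le {q : ℕ} (hq : 2 ≤ q) (hl : 2 ≤ l) (hlm : l < m)
    (h_min : (l * m).minFac = l) :
    ∑ x ∈ factorPairsGT l (l * m), (q : ℝ) ^ (x.1 + x.2 - 2)
      ≤ 2 * (q : ℝ) ^ (l + m - 2 - m / (3 * l) : ℝ) := by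
  rcases hl.eq_or_lt with rfl | hl3
  · convert sum_pow_factorPairsGT_two_le hq m using 3
    push_cast
    ring
  · refine sum_pow_factorPairsGT_le_two_mul_rpow hq ?_ fun x hx =>
      add_sub_one_le_of_mem_factorPairsGT hl3 h_min hx
    have hl' : (3 : ℝ) ≤ l := mod_cast hl3
    have h_div : (m : ℝ) / (3 * l) ≤ m := div_le_self (Nat.cast_nonneg m) (by linarith)
    linarith

end FactorPairs

section Decomposable

variable {F : Type*} [Field F] {l m : ℕ}

lemma Duniv_eq_union (hl : 2 ≤ l) (hlm : l < m) (h_min : (l * m).minFac = l) :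
    Duniv F (l * m) = monicOriginalComp F l m ∪ monicOriginalComp F m l ∪
      ⋃ x ∈ factorPairsGT l (l * m), monicOriginalComp F x.1 x.2 := by
  ext f
  simp only [Set.mem_union, Set.mem_iUnion, exists_prop, mem_Duniv_iff]
  constructor
  · rintro ⟨k, d, hk, hd, h_mul, hf⟩
    have hlk : l ≤ k := h_min ▸ Nat.minFac_le_of_dvd hk (h_mul ▸ Dvd.intro d rfl)
    have hld : l ≤ d := h_min ▸ Nat.minFac_le_of_dvd hd (h_mul ▸ Dvd.intro_left k rfl)
    rcases hlk.eq_or_lt with rfl | hlk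
    · obtain rfl := Nat.eq_of_mul_eq_mul_left (by omega) h_mul
      exact .inl (.inl hf)
    rcases hld.eq_or_lt with rfl | hld
    · obtain rfl := Nat.eq_of_mul_eq_mul_right (by omega) (h_mul.trans (mul_comm _ _))
      exact .inl (.inr hf)
    · exact .inr ⟨(k, d), mem_factorPairsGT.mpr ⟨h_mul, hlk, hld⟩, hf⟩
  · rintro ((hf | hf) | ⟨x, hx, hf⟩)
    · exact ⟨l, m, hl, by omega, rfl, hf⟩
    · exact ⟨m, l, by omega, hl, mul_comm _ _, hf⟩
    · obtain ⟨h_mul, h1, h2⟩ := mem_factorPairsGT.mp hx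
      exact ⟨x.1, x.2, by omega, by omega, h_mul, hf⟩

lemma ncard_Duniv_mul_self (hl : l.Prime) (hF : (l : F) ≠ 0) :
    (Duniv F (l * l)).ncard = Nat.card F ^ (2 * l - 2) := by
  have h_eq : Duniv F (l * l) = monicOriginalComp F l l := by
    ext f
    rw [mem_Duniv_iff]
    refine ⟨fun ⟨k, d, hk, hd, h_mul, hf⟩ => ?_, fun hf => ⟨l, l, hl.two_le, hl.two_le, rfl, hf⟩⟩
    obtain ⟨rfl, rfl⟩ := (hl.mul_eq_prime_sq_iff (by omega) (by omega)).mp (h_mul.trans (sq l).symm)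
    exact hf
  rw [h_eq, ncard_monicOriginalComp hF hl.two_le hl.ne_zero, two_mul]

variable [Finite F]

lemma ncard_monicOriginalComp_inter_le_rpow (hl : (l : F) ≠ 0) (hl2 : 2 ≤ l) (hlm : l < m) :
    ((monicOriginalComp F l m ∩ monicOriginalComp F m l).ncard : ℝ)
      ≤ (Nat.card F : ℝ) ^ (l + m - 2 - m / (3 * l) : ℝ) := by
  have hl2' : (2 : ℝ) ≤ l := mod_cast hl2
  have hlm' : (l + 1 : ℝ) ≤ m := mod_cast hlm
  have h_exp : (((l - 1) + m / l + (l - 2) : ℕ) : ℝ) ≤ l + m - 2 - m / (3 * l) := by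
    have h_floor : ((m / l : ℕ) : ℝ) ≤ m / l := Nat.cast_div_le
    have h_main : (m : ℝ) / l + m / (3 * l) ≤ m - l + 1 := by
      rw [show (m : ℝ) / l + m / (3 * l) = 4 * m / (3 * l) by field_simp; ring,
        div_le_iff₀ (by positivity)]
      nlinarith
    push_cast [Nat.cast_sub (by omega : 1 ≤ l), Nat.cast_sub hl2]
    linarith
  calc ((monicOriginalComp F l m ∩ monicOriginalComp F m l).ncard : ℝ)
      ≤ (Nat.card F : ℝ) ^ ((l - 1) + m / l + (l - 2)) :=
        mod_cast ncard_monicOriginalComp_inter_le hl hl2 (by omega)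
    _ = (Nat.card F : ℝ) ^ (((l - 1) + m / l + (l - 2) : ℕ) : ℝ) := (Real.rpow_natCast _ _).symm
    _ ≤ (Nat.card F : ℝ) ^ (l + m - 2 - m / (3 * l) : ℝ) :=
        Real.rpow_le_rpow_of_exponent_le (mod_cast Finite.one_lt_card.le) h_exp

lemma ncard_iUnion_monicOriginalComp_le (hl : 2 ≤ l) (hlm : l < m) (h_min : (l * m).minFac = l) :
    ((⋃ x ∈ factorPairsGT l (l * m), monicOriginalComp F x.1 x.2).ncard : ℝ)
      ≤ 2 * (Nat.card F : ℝ) ^ (l + m - 2 - m / (3 * l) : ℝ) := by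
  refine le_trans ?_ (sum_pow_factorPairsGT_le Finite.one_lt_card hl hlm h_min)
  refine mod_cast (Finset.set_ncard_biUnion_le _ _).trans (Finset.sum_le_sum fun x hx => ?_)
  obtain ⟨-, h1, h2⟩ := mem_factorPairsGT.mp hx
  exact ncard_monicOriginalComp_le (by omega) (by omega)

lemma abs_ncard_Duniv_sub_le (hl : 2 ≤ l) (hlm : l < m) (h_min : (l * m).minFac = l)
    (hF : ((l * m : ℕ) : F) ≠ 0) :
    |((Duniv F (l * m)).ncard : ℝ) - 2 * (Nat.card F : ℝ) ^ (l + m - 2)|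
      ≤ 2 * (Nat.card F : ℝ) ^ (l + m - 2 - m / (3 * l) : ℝ) := by
  obtain ⟨hFl, hFm⟩ := mul_ne_zero_iff.mp (Nat.cast_mul (α := F) l m ▸ hF)
  set A := monicOriginalComp F l m with hA
  set B := monicOriginalComp F m l with hB
  set U := ⋃ x ∈ factorPairsGT l (l * m), monicOriginalComp F x.1 x.2
  have hA_fin : A.Finite := finite_monicOriginalComp (by omega) (by omega)
  have hB_fin : B.Finite := finite_monicOriginalComp (by omega) (by omega)
  have hU_fin : U.Finite := (Finset.finite_toSet _).biUnion fun x hx => by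
    obtain ⟨-, h1, h2⟩ := mem_factorPairsGT.mp hx
    exact finite_monicOriginalComp (by omega) (by omega)
  have h_two : ((A ∪ B).ncard : ℝ) + (A ∩ B).ncard = 2 * (Nat.card F : ℝ) ^ (l + m - 2) := by
    have h := Set.ncard_union_add_ncard_inter A B hA_fin hB_fin
    rw [hA, hB, ncard_monicOriginalComp hFl hl (by omega),
      ncard_monicOriginalComp hFm (by omega) (by omega), add_comm m l, ← two_mul] at h
    exact_mod_cast h
  have h_lower : ((A ∪ B).ncard : ℝ) ≤ (A ∪ B ∪ U).ncard :=
    mod_cast Set.ncard_le_ncard Set.subset_union_left ((hA_fin.union hB_fin).union hU_fin)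
  have h_upper : ((A ∪ B ∪ U).ncard : ℝ) ≤ (A ∪ B).ncard + U.ncard :=
    mod_cast Set.ncard_union_le _ _
  have h_inter : ((A ∩ B).ncard : ℝ) ≤ _ := ncard_monicOriginalComp_inter_le_rpow hFl hl hlm
  have h_rest : (U.ncard : ℝ) ≤ _ := ncard_iUnion_monicOriginalComp_le hl hlm h_min
  rw [Duniv_eq_union hl hlm h_min, abs_le]
  constructor
  · have h_pow : 0 ≤ (Nat.card F : ℝ) ^ (l + m - 2 - m / (3 * l) : ℝ) := by positivity
    linarith only [h_two, h_lower, h_inter, h_pow]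
  · have h_nonneg : (0 : ℝ) ≤ (A ∩ B).ncard := Nat.cast_nonneg _
    linarith only [h_two, h_upper, h_rest, h_nonneg]

end Decomposable

section SmallestPrimeFactor

variable {l m n : ℕ}

lemma exists_prime_mul_eq (hn : 2 ≤ n) (h_comp : ¬ n.Prime) :
    ∃ l m, l.Prime ∧ l ≤ m ∧ (l * m).minFac = l ∧ n = l * m := by
  have h_mul : n.minFac * (n / n.minFac) = n := Nat.mul_div_cancel' (Nat.minFac_dvd n)
  exact ⟨n.minFac, n / n.minFac, Nat.minFac_prime (by omega),
    Nat.minFac_le_div (by omega) h_comp, by rw [h_mul], h_mul.symm⟩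

lemma alphaN_mul_self (q : ℕ) (h_min : (l * l).minFac = l) :
    alphaN q (l * l) = (q : ℝ) ^ (2 * l - 2) := by
  rw [alphaN, h_min, if_pos (sq l).symm]

lemma alphaN_mul_of_lt (q : ℕ) (hl : l ≠ 0) (hlm : l < m) (h_min : (l * m).minFac = l) :
    alphaN q (l * m) = 2 * (q : ℝ) ^ (l + m - 2) := by
  have h_ne : l * m ≠ l ^ 2 := by
    rw [sq]
    exact fun h => hlm.ne' (Nat.eq_of_mul_eq_mul_left (by omega) h)
  rw [alphaN, h_min, if_neg h_ne, Nat.mul_div_cancel_left m (by omega)]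

lemma alphaN_mul_rpow_of_lt {q : ℕ} (hq : q ≠ 0) (hl : 2 ≤ l) (hlm : l < m)
    (h_min : (l * m).minFac = l) :
    alphaN q (l * m) * (q : ℝ) ^ (-((l * m : ℕ) : ℝ) / (3 * (l : ℝ) ^ 2))
      = 2 * (q : ℝ) ^ (l + m - 2 - m / (3 * l) : ℝ) := by
  have hl0 : (l : ℝ) ≠ 0 := mod_cast (by omega : l ≠ 0)
  rw [alphaN_mul_of_lt q (by omega) hlm h_min, mul_assoc, ← Real.rpow_natCast,
    ← Real.rpow_add (by positivity), Nat.cast_sub (by omega)]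
  congr 2
  push_cast
  field_simp
  ring

end SmallestPrimeFactor

theorem stmt16 (q : ℕ) (F : Type) [Field F] [Fintype F] (hq : Fintype.card F = q)
    (p : ℕ) (hp : ringChar F = p) (n : ℕ) (hn : 4 ≤ n) (hcomp : ¬ n.Prime)
    (hpn : ¬ p ∣ n) :
    |(Set.ncard (Duniv F n) : ℝ) - alphaN q n| ≤
      alphaN q n * (q : ℝ) ^ (-(n : ℝ) / (3 * (n.minFac : ℝ) ^ 2)) := by
  obtain ⟨l, m, hl, hlm, h_min, rfl⟩ := exists_prime_mul_eq (by omega) hcomp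
  have hF : ((l * m : ℕ) : F) ≠ 0 := fun h => hpn (hp ▸ ringChar.dvd h)
  obtain rfl : q = Nat.card F := by rw [Nat.card_eq_fintype_card, hq]
  rw [h_min]
  rcases hlm.eq_or_lt with rfl | hlm
  · have hFl : (l : F) ≠ 0 := fun h => hF (by rw [Nat.cast_mul, h, zero_mul])
    rw [ncard_Duniv_mul_self hl hFl, alphaN_mul_self _ h_min, Nat.cast_pow, sub_self, abs_zero]
    positivity
  · rw [alphaN_mul_rpow_of_lt Nat.card_pos.ne' hl.two_le hlm h_min,
      alphaN_mul_of_lt _ hl.ne_zero hlm h_min]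
    exact abs_ncard_Duniv_sub_le hl.two_le hlm h_min hF
end
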